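/- arXiv:2209.03852 — 2 statements merged into one kernel-verified Lean document; each statement's English description precedes it below -/
import Mathlib

section
/- Let H²_β be the weighted Hardy space induced by a weight sequence w = (w_k)_{k≥1} with w_k → 1, and let ψ be analytic on an open neighborhood of the closed unit disk with ψ(𝔻) ⊆ 𝔻. Define β̃ = (β̃_n)_{n≥0} by β̃_n = (n+1)β_n. If the composition operator C_ψ is bounded on H²_β, then C_ψ is bounded on H²_{β̃}. Moreover, if the derivative ψ' has no zero on the unit circle ∂𝔻, then conversely boundedness of C_ψ on H²_{β̃} implies boundedness of C_ψ on H²_β. -/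
noncomputable section

open Complex Filter Topology

/-- The sequence-space (ℓ²) model of a weighted Hardy space `H²_β`.
An element `a : H2` represents the analytic function whose `k`-th Taylor
coefficient is `a k / β k` (so that `‖a‖` is exactly the `H²_β`-norm). -/
abbrev H2 : Type := lp (fun _ : ℕ => ℂ) 2

/-- The direct sum (ℓ²-sense) of `m` copies of `H2`. -/
abbrev Hm (m : ℕ) : Type := PiLp 2 (fun _ : Fin m => H2)

/-- The open unit disk 𝔻 ⊆ ℂ. -/
def unitDisk : Set ℂ := Metric.ball 0 1

/-- `β_0 = 1` and `β_k = ∏_{j=1}^k w_j`. -/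
def betaSeq (w : ℕ → ℝ) (k : ℕ) : ℝ := ∏ j ∈ Finset.Icc 1 k, w j

/-- The analytic function on 𝔻 represented by the vector `a` in the model of `H²_β`:
`f(z) = ∑_k (a k / β k) z^k`. -/
def repFun (β : ℕ → ℝ) (a : H2) (z : ℂ) : ℂ := ∑' k, (a k / (β k : ℂ)) * z ^ k

/-- `T` is (the ℓ²-model of) the multiplication operator `M_g` on `H²_β`.
Existence of such a `T` says precisely that `M_g` is bounded on `H²_β`. -/
def RepMul (β : ℕ → ℝ) (g : ℂ → ℂ) (T : H2 →L[ℂ] H2) : Prop :=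
  ∀ a : H2, ∀ z ∈ unitDisk, repFun β (T a) z = g z * repFun β a z

/-- `T` is (the ℓ²-model of) the composition operator `C_ψ` on `H²_β`.
Existence of such a `T` says precisely that `C_ψ` is bounded on `H²_β`. -/
def RepComp (β : ℕ → ℝ) (ψ : ℂ → ℂ) (T : H2 →L[ℂ] H2) : Prop :=
  ∀ a : H2, ∀ z ∈ unitDisk, repFun β (T a) z = repFun β a (ψ z)

/-- The Möbius factor `φ_{z₀}(z) = (z₀ - z)/(1 - conj z₀ · z)`. -/
def mobius (z₀ z : ℂ) : ℂ := (z₀ - z) / (1 - (starRingEnd ℂ) z₀ * z)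

/-- `φ` belongs to `Aut(𝔻)`, i.e. `φ(z) = e^{iθ}(z₀ - z)/(1 - conj z₀ · z)`. -/
def IsDiskAut (φ : ℂ → ℂ) : Prop :=
  ∃ (θ : ℝ) (z₀ : ℂ), z₀ ∈ unitDisk ∧
    ∀ z, φ z = Complex.exp (θ * Complex.I) * mobius z₀ z

/-- `B` is a finite Blaschke product of order `m`. -/
def IsBlaschke (m : ℕ) (B : ℂ → ℂ) : Prop :=
  ∃ (θ : ℝ) (zs : Fin m → ℂ), (∀ j, zs j ∈ unitDisk) ∧
    ∀ z, B z = Complex.exp (θ * Complex.I) * ∏ j, mobius (zs j) z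

/-- `w` is a positive weight sequence tending to `1` such that the weighted Hardy
space `H²_β` is of polynomial growth: `sup_k (k+1)|w_k - 1| < ∞`. -/
def PolyGrowth (w : ℕ → ℝ) : Prop :=
  (∀ k, 1 ≤ k → 0 < w k) ∧ Tendsto w atTop (nhds 1) ∧
    ∃ M : ℝ, ∀ k : ℕ, 1 ≤ k → ((k : ℝ) + 1) * |w k - 1| ≤ M

/-- `f` is analytic on an open neighbourhood of the closed unit disk. -/
def AnalyticOnClosedDisk (f : ℂ → ℂ) : Prop :=
  ∃ U : Set ℂ, IsOpen U ∧ Metric.closedBall (0:ℂ) 1 ⊆ U ∧ AnalyticOnNhd ℂ f U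

/-- Taylor coefficient at the origin. -/
def cf (f : ℂ → ℂ) (n : ℕ) : ℂ := (n.factorial : ℂ)⁻¹ * iteratedDeriv n f 0

def GoodW (β : ℕ → ℝ) : Prop :=
  (∀ k, 0 < β k) ∧ Tendsto (fun k => β (k + 1) / β k) atTop (𝓝 1)

def MemH (β : ℕ → ℝ) (f : ℂ → ℂ) : Prop :=
  DifferentiableOn ℂ f unitDisk ∧ Summable (fun k => ‖cf f k‖ ^ 2 * β k ^ 2)

lemma cf_congr {f g : ℂ → ℂ} (h : ∀ z ∈ unitDisk, f z = g z) (n : ℕ) : cf f n = cf g n := by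
  have : f =ᶠ[𝓝 0] g := by
    filter_upwards [Metric.ball_mem_nhds (0:ℂ) one_pos] with z hz using h z hz
  simp only [cf]
  rw [this.iteratedDeriv_eq]

lemma MemH.congr {β : ℕ → ℝ} {f g : ℂ → ℂ} (hf : MemH β f) (h : ∀ z ∈ unitDisk, g z = f z) :
    MemH β g := by
  refine ⟨hf.1.congr h, ?_⟩
  simpa only [cf_congr h] using hf.2

lemma cf_hasSum {f : ℂ → ℂ} {R : ℝ} (hf : DifferentiableOn ℂ f (Metric.ball 0 R)) {z : ℂ}
    (hz : z ∈ Metric.ball (0:ℂ) R) : HasSum (fun n => cf f n * z ^ n) (f z) := by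
  have := Complex.hasSum_taylorSeries_on_ball hf hz
  refine this.congr_fun ?_ |> fun h => h
  intro n
  simp [cf]; ring

lemma cf_deriv (f : ℂ → ℂ) (n : ℕ) : cf (deriv f) n = ((n : ℂ) + 1) * cf f (n + 1) := by
  simp only [cf, iteratedDeriv_succ', Nat.factorial_succ]
  have : (n.factorial : ℂ) ≠ 0 := by exact_mod_cast n.factorial_ne_zero
  have h2 : ((n : ℂ) + 1) ≠ 0 := by exact_mod_cast n.succ_ne_zero
  push_cast
  field_simp

lemma eball_eq_unitDisk : Metric.eball (0:ℂ) 1 = unitDisk := by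
  have := Metric.eball_coe (x := (0:ℂ)) (ε := 1)
  simpa [unitDisk] using this

lemma hasFPS_of_hasSum {f : ℂ → ℂ} {c : ℕ → ℂ}
    (h : ∀ z ∈ unitDisk, HasSum (fun n => c n * z ^ n) (f z)) :
    HasFPowerSeriesOnBall f (FormalMultilinearSeries.ofScalars ℂ c) 0 1 := by
  refine ⟨?_, one_pos, ?_⟩
  · refine ENNReal.le_of_forall_nnreal_lt fun r hr => ?_
    have hr1 : (r : ℝ) < 1 := by exact_mod_cast hr
    refine FormalMultilinearSeries.le_radius_of_summable _ ?_
    have := (h (r : ℂ) (by simp [unitDisk, hr1])).summable.norm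
    refine this.congr fun n => ?_
    rw [FormalMultilinearSeries.ofScalars_norm]
    simp
  · intro y hy
    have hy' : y ∈ unitDisk := by
      rw [← eball_eq_unitDisk]; exact hy
    have := h y hy'
    simpa [FormalMultilinearSeries.ofScalars_apply_eq, mul_comm] using this

lemma cf_of_hasSum {f : ℂ → ℂ} {c : ℕ → ℂ}
    (h : ∀ z ∈ unitDisk, HasSum (fun n => c n * z ^ n) (f z)) :
    DifferentiableOn ℂ f unitDisk ∧ ∀ n, cf f n = c n := by
  have H := hasFPS_of_hasSum h
  refine ⟨?_, fun n => ?_⟩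
  · have := H.differentiableOn
    rwa [eball_eq_unitDisk] at this
  · have := H.factorial_smul (1:ℂ) n
    have h2 : (n.factorial : ℂ) ≠ 0 := by exact_mod_cast n.factorial_ne_zero
    rw [FormalMultilinearSeries.ofScalars_apply_eq] at this
    simp only [cf, iteratedDeriv_eq_iteratedFDeriv]
    rw [← this]
    simp [h2]

lemma cf_mul {f g : ℂ → ℂ} (hf : DifferentiableOn ℂ f unitDisk)
    (hg : DifferentiableOn ℂ g unitDisk) (n : ℕ) :
    cf (fun z => f z * g z) n = ∑ k ∈ Finset.range (n + 1), cf f k * cf g (n - k) := by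
  refine (cf_of_hasSum (c := fun n => ∑ k ∈ Finset.range (n + 1), cf f k * cf g (n - k)) ?_).2 n
  intro z hz
  have h1 := cf_hasSum hf hz
  have h2 := cf_hasSum hg hz
  have := hasSum_sum_range_mul_of_summable_norm h1.summable.norm h2.summable.norm
  rw [h1.tsum_eq, h2.tsum_eq] at this
  refine this.congr_fun ?_ |> fun h => h
  intro n
  rw [Finset.sum_mul]
  refine Finset.sum_congr rfl fun k hk => ?_
  have : k ≤ n := by simpa [Nat.lt_succ_iff] using hk
  rw [show z ^ n = z ^ k * z ^ (n - k) by rw [← pow_add]; congr 1; omega]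
  ring

lemma summable_pow_div {β : ℕ → ℝ} (hβ : GoodW β) {r : ℝ} (h0 : 0 ≤ r) (hr : r < 1) :
    Summable (fun k => (r ^ k / β k) ^ 2) := by
  rcases h0.eq_or_lt with rfl | h0
  · refine summable_of_ne_finset_zero (s := {0}) fun b hb => ?_
    simp at hb; simp [hb]
  refine summable_of_ratio_test_tendsto_lt_one (l := r ^ 2) (by nlinarith) ?_ ?_
  · refine Eventually.of_forall fun k => ?_
    have := hβ.1 k
    positivity
  · have := ((hβ.2.inv₀ one_ne_zero).const_mul r).pow 2
    rw [inv_one, mul_one] at this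
    refine this.congr fun k => ?_
    have h1 := hβ.1 k
    have h2 := hβ.1 (k+1)
    rw [Real.norm_of_nonneg (by positivity), Real.norm_of_nonneg (by positivity)]
    field_simp
    ring

lemma exists_kernel {β : ℕ → ℝ} (hβ : GoodW β) {z : ℂ} (hz : z ∈ unitDisk) :
    ∃ v : H2, ∀ a : H2, HasSum (fun k => (a k / (β k : ℂ)) * z ^ k) (inner ℂ v a) := by
  have hz' : ‖z‖ < 1 := by simpa [unitDisk] using hz
  have hm : Memℓp (fun k => (starRingEnd ℂ) (z ^ k / (β k : ℂ))) (2 : ENNReal) := by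
    refine memℓp_gen ?_
    refine (summable_pow_div hβ (norm_nonneg z) hz').congr fun k => ?_
    simp [abs_of_pos (hβ.1 k)]
  refine ⟨⟨_, hm⟩, fun a => ?_⟩
  refine (lp.hasSum_inner (𝕜 := ℂ) (⟨_, hm⟩ : H2) a).congr_fun ?_ |> fun h => h
  intro k
  simp; ring

lemma repFun_hasSum {β : ℕ → ℝ} (hβ : GoodW β) (a : H2) {z : ℂ} (hz : z ∈ unitDisk) :
    HasSum (fun k => (a k / (β k : ℂ)) * z ^ k) (repFun β a z) := by
  obtain ⟨v, hv⟩ := exists_kernel hβ hz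
  exact (hv a).summable.hasSum

lemma cf_repFun {β : ℕ → ℝ} (hβ : GoodW β) (a : H2) (n : ℕ) :
    cf (repFun β a) n = a n / (β n : ℂ) :=
  (cf_of_hasSum fun _ hz => repFun_hasSum hβ a hz).2 n

lemma memH_repFun {β : ℕ → ℝ} (hβ : GoodW β) (a : H2) : MemH β (repFun β a) := by
  refine ⟨(cf_of_hasSum fun _ hz => repFun_hasSum hβ a hz).1, ?_⟩
  have := (lp.memℓp a).summable (by norm_num)
  refine this.congr fun k => ?_
  rw [cf_repFun hβ]
  have := hβ.1 k
  simp [abs_of_pos this]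
  field_simp

lemma MemH.exists_rep {β : ℕ → ℝ} (hβ : GoodW β) {f : ℂ → ℂ} (hf : MemH β f) :
    ∃ a : H2, ∀ z ∈ unitDisk, repFun β a z = f z := by
  have hm : Memℓp (fun k => cf f k * (β k : ℂ)) (2 : ENNReal) := by
    refine memℓp_gen ?_
    refine hf.2.congr fun k => ?_
    simp [abs_of_pos (hβ.1 k)]; ring
  refine ⟨⟨_, hm⟩, fun z hz => ?_⟩
  refine HasSum.tsum_eq ?_
  convert cf_hasSum hf.1 hz using 2 with k
  have : (β k : ℂ) ≠ 0 := by exact_mod_cast (hβ.1 k).ne'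
  change cf f k * (β k : ℂ) / (β k : ℂ) * z ^ k = _
  rw [mul_div_cancel_right₀ _ this]

lemma rep_inj {β : ℕ → ℝ} (hβ : GoodW β) {a b : H2}
    (h : ∀ z ∈ unitDisk, repFun β a z = repFun β b z) : a = b := by
  ext n
  have := cf_congr h n
  rw [cf_repFun hβ, cf_repFun hβ] at this
  have h2 : (β n : ℂ) ≠ 0 := by exact_mod_cast (hβ.1 n).ne'
  field_simp at this
  exact this

lemma exists_op {β : ℕ → ℝ} (hβ : GoodW β) {ψ : ℂ → ℂ} (hmap : Set.MapsTo ψ unitDisk unitDisk)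
    (h : ∀ a : H2, MemH β (fun z => repFun β a (ψ z))) :
    ∃ T : H2 →L[ℂ] H2, RepComp β ψ T := by
  choose T hT using fun a => (h a).exists_rep hβ
  have hk : ∀ z ∈ unitDisk, ∃ v : H2, ∀ a : H2, repFun β a z = inner ℂ v a := fun z hz => by
    obtain ⟨v, hv⟩ := exists_kernel hβ hz
    exact ⟨v, fun a => (hv a).tsum_eq⟩
  let L : H2 →ₗ[ℂ] H2 :=
    { toFun := T
      map_add' := fun a b => rep_inj hβ fun z hz => by
        obtain ⟨v, hv⟩ := hk z hz
        obtain ⟨u, hu⟩ := hk _ (hmap hz)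
        rw [hT _ z hz, hu, inner_add_right, ← hu, ← hu, ← hT _ z hz, ← hT _ z hz, hv, hv, hv,
          inner_add_right]
      map_smul' := fun c a => rep_inj hβ fun z hz => by
        obtain ⟨v, hv⟩ := hk z hz
        obtain ⟨u, hu⟩ := hk _ (hmap hz)
        rw [hT _ z hz, hu, inner_smul_right, ← hu, ← hT _ z hz, hv, hv, RingHom.id_apply,
          inner_smul_right] }
  refine ⟨ContinuousLinearMap.ofSeqClosedGraph (g := L) ?_, ?_⟩
  · intro s x y hs hy
    refine rep_inj hβ fun z hz => ?_
    obtain ⟨v, hv⟩ := hk z hz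
    obtain ⟨u, hu⟩ := hk _ (hmap hz)
    have e : repFun β (L x) z = repFun β x (ψ z) := hT x z hz
    rw [e, hu, hv]
    have t1 : Tendsto (fun n => inner ℂ v ((L ∘ s) n)) atTop (𝓝 (inner ℂ v y)) :=
      (tendsto_const_nhds (x := v)).inner hy
    have t2 : Tendsto (fun n => inner ℂ u (s n)) atTop (𝓝 (inner ℂ u x)) :=
      (tendsto_const_nhds (x := u)).inner hs
    refine tendsto_nhds_unique t1 (t2.congr fun n => ?_)
    rw [← hu, ← hv]
    exact (hT _ z hz).symm
  · intro a z hz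
    exact hT a z hz

lemma sq_step {ρ x y : ℝ} (h0 : 0 ≤ ρ) (h1 : ρ < 1) :
    (x + ρ * y) ^ 2 ≤ x ^ 2 / (1 - ρ) + ρ * y ^ 2 := by
  have h : 0 < 1 - ρ := by linarith
  have : x ^ 2 / (1 - ρ) + ρ * y ^ 2 - (x + ρ * y) ^ 2
      = ρ * (x - (1 - ρ) * y) ^ 2 / (1 - ρ) := by
    field_simp; ring
  have h2 : 0 ≤ ρ * (x - (1 - ρ) * y) ^ 2 / (1 - ρ) := by positivity
  linarith

lemma conv_summable {ρ : ℝ} (h0 : 0 ≤ ρ) (h1 : ρ < 1) {x : ℕ → ℝ}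
    (hx : Summable (fun n => x n ^ 2)) :
    Summable (fun n => (∑ k ∈ Finset.range (n + 1), ρ ^ k * x (n - k)) ^ 2) := by
  set y : ℕ → ℝ := fun n => ∑ k ∈ Finset.range (n + 1), ρ ^ k * x (n - k) with hy
  have y0 : y 0 = x 0 := by simp [hy]
  have ys : ∀ n, y (n + 1) = x (n + 1) + ρ * y n := fun n => by
    simp only [hy]
    rw [Finset.sum_range_succ', Finset.mul_sum, add_comm]
    congr 1
    · simp
    · refine Finset.sum_congr rfl fun k _ => ?_
      rw [Nat.add_sub_add_right]; ring
  have h : 0 < 1 - ρ := by linarith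
  have key : ∀ N, ∑ n ∈ Finset.range (N + 1), y n ^ 2 ≤
      (∑ n ∈ Finset.range (N + 1), x n ^ 2) / (1 - ρ)
        + ρ * ∑ n ∈ Finset.range N, y n ^ 2 := fun N => by
    rw [Finset.sum_range_succ', Finset.sum_range_succ' (fun n => x n ^ 2), y0, add_div,
      Finset.sum_div, Finset.mul_sum]
    have e1 : ∑ n ∈ Finset.range N, y (n + 1) ^ 2 ≤
        ∑ n ∈ Finset.range N, (x (n + 1) ^ 2 / (1 - ρ) + ρ * y n ^ 2) :=
      Finset.sum_le_sum fun n _ => by rw [ys]; exact sq_step h0 h1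
    rw [Finset.sum_add_distrib] at e1
    have e2 : x 0 ^ 2 ≤ x 0 ^ 2 / (1 - ρ) := by
      rw [le_div_iff₀ h]; nlinarith [sq_nonneg (x 0)]
    linarith
  refine summable_of_sum_range_le (c := (∑' n, x n ^ 2) / (1 - ρ) ^ 2)
    (fun n => sq_nonneg _) fun N => ?_
  change ∑ n ∈ Finset.range N, y n ^ 2 ≤ _
  have hN := key N
  rw [Finset.sum_range_succ] at hN
  have hX : ∑ n ∈ Finset.range (N + 1), x n ^ 2 ≤ ∑' n, x n ^ 2 :=
    hx.sum_le_tsum _ fun n _ => sq_nonneg _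
  have := sq_nonneg (y N)
  have hX2 := div_le_div_of_nonneg_right hX h.le
  have e : (∑' n, x n ^ 2) / (1 - ρ) ^ 2 = (∑' n, x n ^ 2) / (1 - ρ) / (1 - ρ) := by
    field_simp
  rw [e, le_div_iff₀ h]
  linarith

lemma back_summable {ρ : ℝ} (h0 : 0 ≤ ρ) (h1 : ρ < 1) {X Y : ℕ → ℝ}
    (hX : ∀ n, 0 ≤ X n) (hY : ∀ n, 0 ≤ Y n) (hs : Summable Y)
    (hrec : ∀ n, X n ≤ Y n + ρ * X (n + 1))
    (hdec : ∀ n, Tendsto (fun m => ρ ^ m * X (n + m)) atTop (𝓝 0)) : Summable X := by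
  have h : 0 < 1 - ρ := by linarith
  have hb : ∀ m n, X n ≤ ∑ k ∈ Finset.range m, Y (n + k) + ρ ^ m * X (n + m) := by
    intro m
    induction m with
    | zero => intro n; simp
    | succ m ih =>
      intro n
      refine (ih n).trans ?_
      rw [Finset.sum_range_succ, add_assoc]
      gcongr
      have hp : ρ ^ m ≤ 1 := pow_le_one₀ h0 h1.le
      have hp0 : 0 ≤ ρ ^ m := pow_nonneg h0 m
      calc ρ ^ m * X (n + m) ≤ ρ ^ m * (Y (n + m) + ρ * X (n + m + 1)) :=
            mul_le_mul_of_nonneg_left (hrec _) hp0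
        _ = ρ ^ m * Y (n + m) + ρ ^ (m + 1) * X (n + (m + 1)) := by
            rw [← add_assoc]; ring
        _ ≤ _ := by
            have := mul_le_mul_of_nonneg_right hp (hY (n + m))
            linarith
  have hbd : ∀ n, X n ≤ ∑' k, Y k := fun n => by
    have ht := (hdec n).const_add (∑' k, Y k)
    rw [add_zero] at ht
    refine ge_of_tendsto' ht fun m => (hb m n).trans ?_
    gcongr
    have := hs.sum_le_tsum (Finset.Ico n (n + m)) fun k _ => hY k
    rwa [Finset.sum_Ico_eq_sum_range, Nat.add_sub_cancel_left] at this
  refine summable_of_sum_range_le (c := (2 * ∑' k, Y k) / (1 - ρ)) hX fun N => ?_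
  rw [le_div_iff₀ h]
  have e1 : ∑ n ∈ Finset.range N, X n ≤ ∑ n ∈ Finset.range N, (Y n + ρ * X (n + 1)) :=
    Finset.sum_le_sum fun n _ => hrec n
  rw [Finset.sum_add_distrib, ← Finset.mul_sum] at e1
  have e2 : ∑ n ∈ Finset.range N, X (n + 1) ≤ ∑ n ∈ Finset.range N, X n + X N := by
    have a1 := Finset.sum_range_succ X N
    have a2 := Finset.sum_range_succ' X N
    have := hX 0
    linarith
  have e3 := hs.sum_le_tsum (Finset.range N) fun k _ => hY k
  have e4 := hbd N
  have e5 := mul_le_mul_of_nonneg_left e2 h0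
  have e6 : ρ * X N ≤ X N := by nlinarith [hX N]
  linarith

lemma GoodW.ratio {β : ℕ → ℝ} (hβ : GoodW β) :
    ∃ C : ℝ, 0 < C ∧ ∀ k, β (k + 1) ≤ C * β k ∧ β k ≤ C * β (k + 1) := by
  obtain ⟨C1, h1⟩ := hβ.2.bddAbove_range
  obtain ⟨C2, h2⟩ := (hβ.2.inv₀ one_ne_zero).bddAbove_range
  have H1 : ∀ k, β (k + 1) / β k ≤ C1 := fun k => h1 ⟨k, rfl⟩
  have H2 : ∀ k, (β (k + 1) / β k)⁻¹ ≤ C2 := fun k => h2 ⟨k, rfl⟩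
  refine ⟨max 1 (max C1 C2), by positivity, fun k => ⟨?_, ?_⟩⟩
  · rw [← div_le_iff₀ (hβ.1 k)]
    exact (H1 k).trans (by simp)
  · rw [← div_le_iff₀ (hβ.1 _), ← inv_div]
    exact (H2 k).trans (by simp)

lemma GoodW.growth {β : ℕ → ℝ} (hβ : GoodW β) {q : ℝ} (hq : 1 < q) :
    ∃ C : ℝ, 0 < C ∧ ∀ n j, β (n + j) ≤ C * q ^ j * β n := by
  obtain ⟨D, hD, hr⟩ := hβ.ratio
  obtain ⟨N, hN⟩ := eventually_atTop.1 (hβ.2.eventually_le_const hq)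
  have hq0 : 0 < q := by linarith
  have base : ∃ C : ℝ, 0 < C ∧ ∀ n, N ≤ n → ∀ j, β (n + j) ≤ C * q ^ j * β n := by
    refine ⟨1, one_pos, fun n hn j => ?_⟩
    induction j with
    | zero => simp
    | succ j ih =>
      have := hN (n + j) (by omega)
      rw [div_le_iff₀ (hβ.1 _)] at this
      calc β (n + (j + 1)) ≤ q * β (n + j) := this
        _ ≤ q * (1 * q ^ j * β n) := by gcongr
        _ = _ := by ring
  have step : ∀ M, (∃ C : ℝ, 0 < C ∧ ∀ n, M + 1 ≤ n → ∀ j, β (n + j) ≤ C * q ^ j * β n) →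
      ∃ C : ℝ, 0 < C ∧ ∀ n, M ≤ n → ∀ j, β (n + j) ≤ C * q ^ j * β n := by
    rintro M ⟨C, hC, h⟩
    refine ⟨max 1 (max C (C * D)), by positivity, fun n hn j => ?_⟩
    have hbn := hβ.1 n
    rcases hn.eq_or_lt with rfl | hn
    · cases j with
      | zero =>
        have : 1 ≤ max 1 (max C (C * D)) := le_max_left _ _
        simp only [add_zero, pow_zero, mul_one]
        nlinarith
      | succ j =>
        have h1 := h (M + 1) le_rfl j
        have h2 := (hr M).1
        have h3 : C * D ≤ max 1 (max C (C * D)) := by simp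
        calc β (M + (j + 1)) = β (M + 1 + j) := by congr 1; omega
          _ ≤ C * q ^ j * β (M + 1) := h1
          _ ≤ C * q ^ j * (D * β M) := by gcongr
          _ = (C * D) * q ^ j * β M := by ring
          _ ≤ (C * D) * q ^ (j + 1) * β M := by gcongr; exacts [hq.le, by omega]
          _ ≤ _ := by gcongr
    · have h3 : C ≤ max 1 (max C (C * D)) := by simp
      exact (h n hn j).trans (by gcongr)
  have all : ∀ M, (∃ C : ℝ, 0 < C ∧ ∀ n, M ≤ n → ∀ j, β (n + j) ≤ C * q ^ j * β n) →
      ∃ C : ℝ, 0 < C ∧ ∀ n, 0 ≤ n → ∀ j, β (n + j) ≤ C * q ^ j * β n := by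
    intro M
    induction M with
    | zero => exact fun h => h
    | succ M ih => exact fun h => ih (step M h)
  obtain ⟨C, hC, h⟩ := all N base
  exact ⟨C, hC, fun n j => h n (Nat.zero_le n) j⟩

lemma memH_deriv {β : ℕ → ℝ} (hβ : GoodW β) {f : ℂ → ℂ}
    (hf : MemH (fun n => ((n : ℝ) + 1) * β n) f) : MemH β (deriv f) := by
  refine ⟨hf.1.deriv Metric.isOpen_ball, ?_⟩
  obtain ⟨C, hC, hr⟩ := hβ.ratio
  refine Summable.of_nonneg_of_le (fun k => by positivity) (fun k => ?_)
    (((summable_nat_add_iff 1).2 hf.2).mul_left (C ^ 2))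
  rw [cf_deriv, norm_mul, show ‖(k : ℂ) + 1‖ = (k : ℝ) + 1 by
    have := Complex.norm_natCast (k + 1); push_cast at this; exact this]
  have h1 := (hr k).2
  have h2 := hβ.1 k
  have h3 := hβ.1 (k + 1)
  push_cast
  calc (((k : ℝ) + 1) * ‖cf f (k + 1)‖) ^ 2 * β k ^ 2
      ≤ (((k : ℝ) + 1 + 1) * ‖cf f (k + 1)‖) ^ 2 * (C * β (k + 1)) ^ 2 := by
        gcongr; linarith
    _ = _ := by ring

lemma memH_of_deriv {β : ℕ → ℝ} (hβ : GoodW β) {f : ℂ → ℂ}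
    (hd : DifferentiableOn ℂ f unitDisk) (hf : MemH β (deriv f)) :
    MemH (fun n => ((n : ℝ) + 1) * β n) f := by
  refine ⟨hd, ?_⟩
  obtain ⟨C, hC, hr⟩ := hβ.ratio
  refine (summable_nat_add_iff 1).1 ?_
  refine Summable.of_nonneg_of_le (fun k => by positivity) (fun k => ?_)
    (hf.2.mul_left ((2 * C) ^ 2))
  rw [cf_deriv, norm_mul, show ‖(k : ℂ) + 1‖ = (k : ℝ) + 1 by
    have := Complex.norm_natCast (k + 1); push_cast at this; exact this]
  have h1 := (hr k).1
  have h2 := hβ.1 k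
  have h3 := hβ.1 (k + 1)
  push_cast
  calc ‖cf f (k + 1)‖ ^ 2 * (((k : ℝ) + 1 + 1) * β (k + 1)) ^ 2
      ≤ ‖cf f (k + 1)‖ ^ 2 * ((2 * ((k : ℝ) + 1)) * (C * β k)) ^ 2 := by
        gcongr; linarith [(Nat.cast_nonneg k : (0:ℝ) ≤ k)]
    _ = _ := by ring

lemma cf_decay {g : ℂ → ℂ} (hg : AnalyticOnNhd ℂ g (Metric.closedBall 0 1)) :
    ∃ C ρ : ℝ, 0 < C ∧ 0 < ρ ∧ ρ < 1 ∧ ∀ n, ‖cf g n‖ ≤ C * ρ ^ n := by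
  obtain ⟨δ, hδ, hsub⟩ := (isCompact_closedBall (0:ℂ) 1).exists_cthickening_subset_open
    (isOpen_analyticAt ℂ g) hg
  rw [cthickening_closedBall hδ.le zero_le_one] at hsub
  have hd : DifferentiableOn ℂ g (Metric.ball 0 (δ + 1)) := fun z hz =>
    (hsub (Metric.ball_subset_closedBall hz)).differentiableAt.differentiableWithinAt
  have hR : ((δ / 2 + 1 : ℝ) : ℂ) ∈ Metric.ball (0:ℂ) (δ + 1) := by
    rw [mem_ball_zero_iff, Complex.norm_real, Real.norm_of_nonneg (by positivity)]; linarith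
  have hs := (cf_hasSum hd hR).summable.norm.tendsto_atTop_zero
  obtain ⟨C, hC⟩ := hs.bddAbove_range
  have hR0 : 0 < δ / 2 + 1 := by positivity
  refine ⟨max C 1, (δ / 2 + 1)⁻¹, by positivity, by positivity,
    inv_lt_one_of_one_lt₀ (by linarith), fun n => ?_⟩
  have h1 : ‖cf g n‖ * (δ / 2 + 1) ^ n ≤ C := by
    have := hC ⟨n, rfl⟩
    simp only [norm_mul, norm_pow, Complex.norm_real] at this
    rwa [Real.norm_of_nonneg hR0.le] at this
  rw [inv_pow, ← div_eq_mul_inv, le_div_iff₀ (by positivity)]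
  exact h1.trans (le_max_left _ _)

lemma memH_mul {β : ℕ → ℝ} (hβ : GoodW β) {g f : ℂ → ℂ}
    (hg : AnalyticOnNhd ℂ g (Metric.closedBall 0 1)) (hf : MemH β f) :
    MemH β (fun z => g z * f z) := by
  have hgd : DifferentiableOn ℂ g unitDisk :=
    hg.differentiableOn.mono Metric.ball_subset_closedBall
  refine ⟨hgd.mul hf.1, ?_⟩
  obtain ⟨C, ρ, hC, hρ, hρ1, hb⟩ := cf_decay hg
  set s := Real.sqrt ρ with hs
  have s0 : 0 < s := Real.sqrt_pos.2 hρ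
  have s1 : s < 1 := by rw [hs, Real.sqrt_lt' one_pos]; simpa using hρ1
  have ss : s * s = ρ := Real.mul_self_sqrt hρ.le
  obtain ⟨D, hD, hgr⟩ := hβ.growth (q := s⁻¹) (one_lt_inv₀ s0 |>.2 s1)
  have hsum := conv_summable (x := fun n => ‖cf f n‖ * β n) s0.le s1
    (hf.2.congr fun n => by ring)
  refine Summable.of_nonneg_of_le (fun k => by positivity) (fun n => ?_)
    (hsum.mul_left ((C * D) ^ 2))
  rw [← mul_pow, ← mul_pow]
  have hbn := hβ.1 n
  refine pow_le_pow_left₀ (by positivity) ?_ 2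
  rw [cf_mul hgd hf.1, Finset.mul_sum]
  refine (mul_le_mul_of_nonneg_right (norm_sum_le _ _) hbn.le).trans ?_
  rw [Finset.sum_mul]
  refine Finset.sum_le_sum fun k hk => ?_
  have hk' : k ≤ n := by simpa [Nat.lt_succ_iff] using hk
  have h1 := hgr (n - k) k
  rw [Nat.sub_add_cancel hk'] at h1
  have h2 := hβ.1 (n - k)
  rw [norm_mul]
  calc ‖cf g k‖ * ‖cf f (n - k)‖ * β n
      ≤ (C * ρ ^ k) * ‖cf f (n - k)‖ * (D * s⁻¹ ^ k * β (n - k)) := by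
        gcongr; exact hb k
    _ = C * D * (s ^ k * (‖cf f (n - k)‖ * β (n - k))) := by
        rw [← ss, mul_pow, inv_pow]
        field_simp

lemma cf_linear (a : ℂ) (n : ℕ) :
    cf (fun z => z - a) n = if n = 0 then -a else if n = 1 then 1 else 0 := by
  refine (cf_of_hasSum (c := fun n => if n = 0 then -a else if n = 1 then 1 else 0) ?_).2 n
  intro z _
  have := hasSum_sum_of_ne_finset_zero (L := SummationFilter.unconditional ℕ) (f := fun n : ℕ =>
    (if n = 0 then -a else if n = 1 then 1 else 0) * z ^ n) (s := Finset.range 2) (by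
      intro b hb
      simp only [Finset.mem_range, not_lt] at hb
      rw [if_neg (by omega), if_neg (by omega), zero_mul])
  convert this using 1
  simp [Finset.sum_range_succ]
  ring

lemma cf_linear_mul {h : ℂ → ℂ} (hh : DifferentiableOn ℂ h unitDisk) (a : ℂ) (n : ℕ) :
    cf (fun z => (z - a) * h z) (n + 1) = cf h n - a * cf h (n + 1) := by
  rw [cf_mul (by fun_prop) hh, Finset.sum_range_succ', Finset.sum_range_succ']
  simp only [cf_linear]
  rw [Finset.sum_eq_zero]
  · simp; ring
  · intro k _
    simp

lemma memH_of_linear_mul {β : ℕ → ℝ} (hβ : GoodW β) {h : ℂ → ℂ} {a : ℂ} (ha : ‖a‖ < 1)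
    (hh : DifferentiableOn ℂ h unitDisk) (hm : MemH β (fun z => (z - a) * h z)) :
    MemH β h := by
  refine ⟨hh, ?_⟩
  obtain ⟨ρ, hρa, hρ1⟩ := exists_between ha
  have hρ : 0 < ρ := (norm_nonneg a).trans_lt hρa
  set s := Real.sqrt (Real.sqrt ρ) with hs
  have s0 : 0 < s := Real.sqrt_pos.2 (Real.sqrt_pos.2 hρ)
  have s4 : s ^ 4 = ρ := by
    rw [show s ^ 4 = (s ^ 2) ^ 2 by ring, hs, Real.sq_sqrt (Real.sqrt_nonneg _),
      Real.sq_sqrt hρ.le]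
  have s1 : s < 1 := by
    by_contra hc
    have := one_le_pow₀ (n := 4) (not_lt.1 hc)
    linarith
  obtain ⟨D, hD, hgr⟩ := hβ.growth (q := s⁻¹) (one_lt_inv₀ s0 |>.2 s1)
  obtain ⟨C, hC, hr⟩ := hβ.ratio
  have hev : ∀ᶠ n in atTop, ‖a‖ * β n ≤ ρ * β (n + 1) := by
    have ht : Tendsto (fun k => ‖a‖ * (β (k + 1) / β k)⁻¹) atTop (𝓝 ‖a‖) := by
      simpa using (hβ.2.inv₀ one_ne_zero).const_mul ‖a‖
    filter_upwards [ht.eventually_le_const hρa] with n hn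
    have h1 := hβ.1 n
    have h2 := hβ.1 (n + 1)
    rwa [inv_div, ← mul_div_assoc, div_le_iff₀ h2] at hn
  obtain ⟨N, hN⟩ := eventually_atTop.1 hev
  set κ : ℕ → ℂ := cf (fun z => (z - a) * h z) with hκ
  refine (summable_nat_add_iff N).1 ?_
  have hsY : Summable (fun n => (C ^ 2 / (1 - ρ)) *
      (‖κ (n + (N + 1))‖ ^ 2 * β (n + (N + 1)) ^ 2)) :=
    ((summable_nat_add_iff (N + 1)).2 hm.2).mul_left _
  have hρ' : 0 < 1 - ρ := by linarith
  refine back_summable hρ.le hρ1 (fun n => by positivity) (fun n => by positivity) hsY ?_ ?_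
  · intro n
    have h1 := hN (n + N) (by omega)
    have h2 := (hr (n + N)).2
    have h3 := hβ.1 (n + N)
    have h4 := hβ.1 (n + N + 1)
    have e : cf h (n + N) = κ (n + N + 1) + a * cf h (n + N + 1) := by
      rw [hκ, cf_linear_mul hh]; ring
    have e2 : n + 1 + N = n + N + 1 := by omega
    rw [e2, ← add_assoc]
    have e3 : ‖cf h (n + N)‖ * β (n + N) ≤ C * ‖κ (n + N + 1)‖ * β (n + N + 1)
        + ρ * (‖cf h (n + N + 1)‖ * β (n + N + 1)) := by
      rw [e]
      calc ‖κ (n + N + 1) + a * cf h (n + N + 1)‖ * β (n + N)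
          ≤ (‖κ (n + N + 1)‖ + ‖a‖ * ‖cf h (n + N + 1)‖) * β (n + N) := by
            gcongr
            exact (norm_add_le _ _).trans (by rw [norm_mul])
        _ = ‖κ (n + N + 1)‖ * β (n + N) + ‖cf h (n + N + 1)‖ * (‖a‖ * β (n + N)) := by ring
        _ ≤ ‖κ (n + N + 1)‖ * (C * β (n + N + 1))
            + ‖cf h (n + N + 1)‖ * (ρ * β (n + N + 1)) := by gcongr
        _ = _ := by ring
    calc ‖cf h (n + N)‖ ^ 2 * β (n + N) ^ 2 = (‖cf h (n + N)‖ * β (n + N)) ^ 2 := by ring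
      _ ≤ (C * ‖κ (n + N + 1)‖ * β (n + N + 1)
        + ρ * (‖cf h (n + N + 1)‖ * β (n + N + 1))) ^ 2 := by gcongr
      _ ≤ _ := sq_step hρ.le hρ1
      _ = _ := by ring
  · intro n
    have hmem : (s : ℂ) ∈ unitDisk := by
      rw [unitDisk, mem_ball_zero_iff, Complex.norm_real, Real.norm_of_nonneg s0.le]; exact s1
    have ht := (cf_hasSum hh hmem).summable.norm.tendsto_atTop_zero
    have ht2 : Tendsto (fun m => (D * β 0) ^ 2 * (s ^ (n + N))⁻¹ ^ 4 *
        ‖cf h (m + (n + N)) * (s : ℂ) ^ (m + (n + N))‖ ^ 2) atTop (𝓝 0) := by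
      have := (((tendsto_add_atTop_iff_nat (n + N)).2 ht).pow 2).const_mul
        ((D * β 0) ^ 2 * (s ^ (n + N))⁻¹ ^ 4)
      simpa using this
    refine squeeze_zero (fun m => by positivity) (fun m => ?_) ht2
    have h1 := hgr 0 (m + (n + N))
    rw [zero_add] at h1
    have e2 : n + m + N = m + (n + N) := by omega
    rw [e2, norm_mul, norm_pow, Complex.norm_real, Real.norm_of_nonneg s0.le]
    set p := m + (n + N) with hp
    have h2 := hβ.1 p
    have h3 := hβ.1 0
    calc ρ ^ m * (‖cf h p‖ ^ 2 * β p ^ 2)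
        ≤ ρ ^ m * (‖cf h p‖ ^ 2 * (D * s⁻¹ ^ p * β 0) ^ 2) := by gcongr
      _ = _ := by
        rw [← s4, hp, pow_add s m (n + N), pow_add s⁻¹ m (n + N), inv_pow, inv_pow]
        field_simp
        ring

lemma memH_of_pow_mul {β : ℕ → ℝ} (hβ : GoodW β) {a : ℂ} (ha : ‖a‖ < 1) (m : ℕ) :
    ∀ h : ℂ → ℂ, DifferentiableOn ℂ h unitDisk → MemH β (fun z => (z - a) ^ m * h z) →
    MemH β h := by
  induction m with
  | zero => intro h _ hm; simpa using hm
  | succ m ih =>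
    intro h hh hm
    refine ih h hh (memH_of_linear_mul hβ ha (h := fun z => (z - a) ^ m * h z) ?_ ?_)
    · exact DifferentiableOn.mul (by fun_prop) hh
    · exact hm.congr fun z _ => by ring

lemma memH_div {β : ℕ → ℝ} (hβ : GoodW β) (n : ℕ) : ∀ g : ℂ → ℂ,
    AnalyticOnNhd ℂ g (Metric.closedBall 0 1) → (∀ z, ‖z‖ = 1 → g z ≠ 0) →
    {z | z ∈ Metric.closedBall (0:ℂ) 1 ∧ g z = 0}.Finite →
    {z | z ∈ Metric.closedBall (0:ℂ) 1 ∧ g z = 0}.ncard = n →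
    ∀ h : ℂ → ℂ, DifferentiableOn ℂ h unitDisk → MemH β (fun z => g z * h z) → MemH β h := by
  induction n with
  | zero =>
    intro g hg _ hfin hcard h hh hm
    have hemp := (Set.ncard_eq_zero hfin).1 hcard
    have hne : ∀ z ∈ Metric.closedBall (0:ℂ) 1, g z ≠ 0 := fun z hz h0 => by
      have : z ∈ {z | z ∈ Metric.closedBall (0:ℂ) 1 ∧ g z = 0} := ⟨hz, h0⟩
      rw [hemp] at this; exact this
    have := memH_mul hβ (hg.inv hne) hm
    refine this.congr fun z hz => ?_
    have := hne z (Metric.ball_subset_closedBall hz)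
    simp only [Pi.inv_apply]
    field_simp
  | succ n ih =>
    intro g hg hc hfin hcard h hh hm
    have hnon : {z | z ∈ Metric.closedBall (0:ℂ) 1 ∧ g z = 0}.Nonempty := by
      rw [← Set.ncard_pos hfin]; omega
    obtain ⟨a, ha, hga⟩ := hnon
    have ha1 : ‖a‖ < 1 := by
      refine lt_of_le_of_ne (by simpa using ha) fun e => hc a e hga
    have hnz : ¬ ∀ᶠ z in 𝓝 a, g z = 0 := fun hz => by
      have := hg.eqOn_zero_of_preconnected_of_eventuallyEq_zero
        (convex_closedBall (0:ℂ) 1).isPreconnected ha hz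
      exact hc 1 (by simp) (this (by simp))
    obtain ⟨m, g₀, hg₀, hg₀a, heq⟩ := (hg a ha).exists_eventuallyEq_pow_smul_nonzero_iff.2 hnz
    set g₁ : ℂ → ℂ := fun z => if z = a then g₀ a else g z / (z - a) ^ m with hg₁
    have hm0 : m ≠ 0 := by
      rintro rfl
      have := heq.self_of_nhds
      simp [hga] at this
      exact hg₀a this.symm
    have e1 : ∀ z, g z = (z - a) ^ m * g₁ z := fun z => by
      by_cases hz : z = a
      · subst hz; simp [hga, hm0]
      · have : z - a ≠ 0 := sub_ne_zero.2 hz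
        simp only [hg₁, if_neg hz]; field_simp
    have e2 : g₁ =ᶠ[𝓝 a] g₀ := by
      filter_upwards [heq] with z hz
      by_cases hza : z = a
      · simp [hg₁, hza]
      · have : z - a ≠ 0 := sub_ne_zero.2 hza
        simp only [hg₁, if_neg hza, hz, smul_eq_mul]; field_simp
    have han : AnalyticOnNhd ℂ g₁ (Metric.closedBall 0 1) := fun z hz => by
      by_cases hza : z = a
      · subst hza; exact hg₀.congr e2.symm
      · have : AnalyticAt ℂ (fun z => g z / (z - a) ^ m) z :=
          (hg z hz).div (by fun_prop) (pow_ne_zero _ (sub_ne_zero.2 hza))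
        refine this.congr ?_
        filter_upwards [isOpen_ne.mem_nhds hza] with y hy
        simp only [hg₁, if_neg hy]
    have hset : {z | z ∈ Metric.closedBall (0:ℂ) 1 ∧ g₁ z = 0} =
        {z | z ∈ Metric.closedBall (0:ℂ) 1 ∧ g z = 0} \ {a} := by
      ext z
      simp only [Set.mem_ofPred_eq, Set.mem_sdiff, Set.mem_singleton_iff]
      constructor
      · rintro ⟨h1, h2⟩
        refine ⟨⟨h1, by rw [e1, h2, mul_zero]⟩, ?_⟩
        rintro rfl
        simp [hg₁] at h2
        exact hg₀a h2
      · rintro ⟨⟨h1, h2⟩, h3⟩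
        refine ⟨h1, ?_⟩
        rw [e1] at h2
        exact (mul_eq_zero.1 h2).resolve_left (pow_ne_zero _ (sub_ne_zero.2 h3))
    have hd1 : DifferentiableOn ℂ g₁ unitDisk :=
      han.differentiableOn.mono Metric.ball_subset_closedBall
    refine ih g₁ han ?_ ?_ ?_ h hh ?_
    · intro z hz h0
      exact hc z hz (by rw [e1, h0, mul_zero])
    · rw [hset]; exact hfin.sdiff
    · rw [hset, Set.ncard_sdiff_singleton_of_mem (a := a) (show a ∈ {z | z ∈ Metric.closedBall (0:ℂ) 1 ∧ g z = 0} from ⟨ha, hga⟩), hcard]; rfl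
    · refine memH_of_pow_mul hβ ha1 m _ (hd1.mul hh) (hm.congr fun z _ => ?_)
      rw [e1]; ring

lemma zeros_finite {g : ℂ → ℂ} (hg : AnalyticOnNhd ℂ g (Metric.closedBall 0 1))
    (hc : ∀ z, ‖z‖ = 1 → g z ≠ 0) :
    {z | z ∈ Metric.closedBall (0:ℂ) 1 ∧ g z = 0}.Finite := by
  by_contra hinf
  obtain ⟨x, hx, hacc⟩ := Set.Infinite.exists_accPt_of_subset_isCompact hinf
    (isCompact_closedBall (0:ℂ) 1) fun z hz => hz.1
  rw [accPt_iff_frequently_nhdsNE] at hacc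
  have := hg.eqOn_zero_of_preconnected_of_frequently_eq_zero
    (convex_closedBall (0:ℂ) 1).isPreconnected hx (hacc.mono fun z hz => hz.2)
  exact hc 1 (by simp) (this (by simp))

lemma goodW_betaSeq {w : ℕ → ℝ} (hpos : ∀ k, 1 ≤ k → 0 < w k)
    (hlim : Tendsto w atTop (nhds 1)) : GoodW (betaSeq w) := by
  have hp : ∀ k, 0 < betaSeq w k := fun k =>
    Finset.prod_pos fun j hj => hpos j (Finset.mem_Icc.1 hj).1
  refine ⟨hp, ((tendsto_add_atTop_iff_nat 1).2 hlim).congr fun k => ?_⟩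
  rw [eq_div_iff (hp k).ne', betaSeq, betaSeq, Finset.prod_Icc_succ_top (by omega), mul_comm]

lemma GoodW.tilde {β : ℕ → ℝ} (hβ : GoodW β) : GoodW (fun n => ((n : ℝ) + 1) * β n) := by
  refine ⟨fun k => mul_pos (by positivity) (hβ.1 k), ?_⟩
  have h1 : Tendsto (fun k : ℕ => 1 + 1 / ((k : ℝ) + 1)) atTop (𝓝 (1 + 0)) :=
    tendsto_one_div_add_atTop_nhds_zero_nat.const_add 1
  have := h1.mul hβ.2
  simp only [add_zero, mul_one] at this
  refine this.congr fun k => ?_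
  have := hβ.1 k
  push_cast
  field_simp

/-- Let `H²_β` come from a weight sequence `w_k → 1`, let `ψ` be
analytic on a neighbourhood of the closed disk with `ψ(𝔻) ⊆ 𝔻`, and let
`β̃_n = (n+1)β_n`. If `C_ψ` is bounded on `H²_β` then `C_ψ` is bounded on `H²_{β̃}`;
moreover if `ψ'` has no zero on the unit circle, then the converse holds. -/
theorem statement5 (w : ℕ → ℝ) (hpos : ∀ k, 1 ≤ k → 0 < w k)
    (hlim : Tendsto w atTop (nhds 1))
    (ψ : ℂ → ℂ) (hψ : AnalyticOnClosedDisk ψ)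
    (hmap : Set.MapsTo ψ unitDisk unitDisk) :
    ((∃ T : H2 →L[ℂ] H2, RepComp (betaSeq w) ψ T) →
      ∃ T : H2 →L[ℂ] H2, RepComp (fun n => ((n : ℝ) + 1) * betaSeq w n) ψ T) ∧
    ((∀ z : ℂ, ‖z‖ = 1 → deriv ψ z ≠ 0) →
      (∃ T : H2 →L[ℂ] H2, RepComp (fun n => ((n : ℝ) + 1) * betaSeq w n) ψ T) →
      ∃ T : H2 →L[ℂ] H2, RepComp (betaSeq w) ψ T) := by
  have hβ := goodW_betaSeq hpos hlim
  have hβ' := hβ.tilde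
  obtain ⟨U, hU, hKU, hψU⟩ := hψ
  have hψK : AnalyticOnNhd ℂ ψ (Metric.closedBall 0 1) := hψU.mono hKU
  have hψ' : AnalyticOnNhd ℂ (deriv ψ) (Metric.closedBall 0 1) := hψU.deriv.mono hKU
  have hψd : DifferentiableOn ℂ ψ unitDisk :=
    hψK.differentiableOn.mono Metric.ball_subset_closedBall
  have hopen : IsOpen unitDisk := Metric.isOpen_ball
  have chain : ∀ f : ℂ → ℂ, DifferentiableOn ℂ f unitDisk → ∀ z ∈ unitDisk,
      deriv (fun z => f (ψ z)) z = deriv ψ z * deriv f (ψ z) := fun f hf z hz => by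
    have h1 := (hψd.differentiableAt (hopen.mem_nhds hz)).hasDerivAt
    have h2 := (hf.differentiableAt (hopen.mem_nhds (hmap hz))).hasDerivAt
    have := (h2.comp z h1).deriv
    rw [mul_comm]
    exact this
  constructor
  · rintro ⟨T, hT⟩
    refine exists_op hβ' hmap fun a => ?_
    have hf := memH_repFun hβ' a
    obtain ⟨a', ha'⟩ := (memH_deriv hβ hf).exists_rep hβ
    refine memH_of_deriv hβ (hf.1.comp hψd hmap) ?_
    refine (memH_mul hβ hψ' (memH_repFun hβ (T a'))).congr fun z hz => ?_
    rw [chain _ hf.1 z hz, hT a' z hz, ha' _ (hmap hz)]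
  · rintro hne ⟨T, hT⟩
    refine exists_op hβ hmap fun a => ?_
    have hf := memH_repFun hβ a
    obtain ⟨F, hF⟩ := DifferentiableOn.isExactOn_ball hf.1
    have hFd : DifferentiableOn ℂ F unitDisk := fun z hz =>
      (hF z hz).differentiableAt.differentiableWithinAt
    have hFm := memH_of_deriv hβ hFd (hf.congr fun z hz => (hF z hz).deriv)
    obtain ⟨a', ha'⟩ := hFm.exists_rep hβ'
    have hcomp : MemH (fun n => ((n : ℝ) + 1) * betaSeq w n) (fun z => F (ψ z)) :=
      (memH_repFun hβ' (T a')).congr fun z hz => by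
        rw [hT a' z hz, ha' _ (hmap hz)]
    refine memH_div hβ _ (deriv ψ) hψ' hne (zeros_finite hψ' hne) rfl _
      (hf.1.comp hψd hmap) ?_
    refine (memH_deriv hβ hcomp).congr fun z hz => ?_
    rw [chain _ hFd z hz, (hF _ (hmap hz)).deriv]
end
end

section
/- Let H²_β be the weighted Hardy space induced by a weight sequence w = (w_k)_{k≥1} with w_k → 1, and let B(z) = ∏_{j=1}^m (z_j − z)/(1 − conj(z_j)z) be a Blaschke product of order m with z_1, …, z_m ∈ 𝔻. Let S be the standard left inverse of M_z on H²_β, defined by S(f)(z) = (f(z) − f(0))/z, and set B̄(z) = conj(B(conj z)). Then B̄(S) belongs to the Cowen–Douglas class B_m(𝔻) and B̄(S) ∘ B(M_z) = I, where I is the identity operator on H²_β. -/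
noncomputable section

open Complex Filter Topology

/-- `S` is (the ℓ²-model of) the standard left inverse of `M_z` on `H²_β`,
`S(f)(z) = (f(z) - f(0))/z`. -/
def RepS (β : ℕ → ℝ) (S : H2 →L[ℂ] H2) : Prop :=
  ∀ a : H2, ∀ z ∈ unitDisk, z ≠ 0 →
    repFun β (S a) z = (repFun β a z - repFun β a 0) / z

/-- The operator `B̄(S)` given by the holomorphic functional calculus for the
Blaschke product with zeros `zs`:  `B̄(S) = ∏_j (conj z_j - S)(1 - z_j S)⁻¹`. -/
def blaschkeBarOp {m : ℕ} (zs : Fin m → ℂ) (S : H2 →L[ℂ] H2) : H2 →L[ℂ] H2 :=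
  (List.ofFn fun j : Fin m =>
    ((starRingEnd ℂ) (zs j) • (1 : H2 →L[ℂ] H2) - S) *
      Ring.inverse ((1 : H2 →L[ℂ] H2) - zs j • S)).prod

/-- The Cowen–Douglas class `B_n(Ω)`. -/
def InCowenDouglas (n : ℕ) (Ω : Set ℂ) (T : H2 →L[ℂ] H2) : Prop :=
  Ω ⊆ spectrum ℂ T ∧
    (∀ ω ∈ Ω, LinearMap.range (T - ω • (1 : H2 →L[ℂ] H2)).toLinearMap = ⊤) ∧
    ((⨆ ω ∈ Ω, LinearMap.ker (T - ω • (1 : H2 →L[ℂ] H2)).toLinearMap).topologicalClosure = ⊤) ∧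
    ∀ ω ∈ Ω, Module.finrank ℂ ↥(LinearMap.ker (T - ω • (1 : H2 →L[ℂ] H2)).toLinearMap) = n


lemma clm_mul (T U : H2 →L[ℂ] H2) (x : H2) : (T * U) x = T (U x) := rfl

lemma exists_wop (σ : ℕ → ℕ) (c : ℕ → ℂ) (C : ℝ) (hC : 0 ≤ C) (hc : ∀ k, ‖c k‖ ≤ C)
    (hinj : ∀ k l, c k ≠ 0 → c l ≠ 0 → σ k = σ l → k = l) :
    ∃ T : H2 →L[ℂ] H2, (∀ (a : H2) (k : ℕ), T a k = c k * a (σ k)) ∧ ‖T‖ ≤ C := by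
  have key : ∀ (a : H2) (s : Finset ℕ),
      ∑ k ∈ s, ‖c k * a (σ k)‖ ^ (2 : ENNReal).toReal ≤ (C * ‖a‖) ^ (2 : ENNReal).toReal := by
    intro a s
    have h1 : ∑ k ∈ s, ‖c k * a (σ k)‖ ^ (2 : ENNReal).toReal
        = ∑ k ∈ s with c k ≠ 0, ‖c k * a (σ k)‖ ^ (2 : ENNReal).toReal := by
      rw [Finset.sum_filter]
      refine Finset.sum_congr rfl fun k _ => ?_
      by_cases h : c k = 0 <;> simp [h]
    rw [h1, Real.mul_rpow hC (norm_nonneg _)]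
    calc ∑ k ∈ s with c k ≠ 0, ‖c k * a (σ k)‖ ^ (2 : ENNReal).toReal
        ≤ ∑ k ∈ s with c k ≠ 0, C ^ (2 : ENNReal).toReal * ‖a (σ k)‖ ^ (2 : ENNReal).toReal := by
          refine Finset.sum_le_sum fun k _ => ?_
          rw [← Real.mul_rpow hC (norm_nonneg _), norm_mul]
          have := hc k
          gcongr
      _ = C ^ (2 : ENNReal).toReal * ∑ l ∈ (s.filter (fun k => c k ≠ 0)).image σ,
            ‖a l‖ ^ (2 : ENNReal).toReal := by
          rw [Finset.sum_image, Finset.mul_sum]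
          intro k hk l hl h
          simp only [Finset.coe_filter, Set.mem_ofPred_eq] at hk hl
          exact hinj k l hk.2 hl.2 h
      _ ≤ _ := by
          gcongr
          exact lp.sum_rpow_le_norm_rpow (by norm_num) a _
  have hmem : ∀ a : H2, Memℓp (fun k => c k * a (σ k)) 2 := fun a => memℓp_gen' (key a)
  let L : H2 →ₗ[ℂ] H2 :=
    { toFun := fun a => ⟨fun k => c k * a (σ k), hmem a⟩
      map_add' := by
        intro a b
        ext k
        exact mul_add _ _ _
      map_smul' := by
        intro r a
        ext k
        exact mul_left_comm _ _ _ }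
  refine ⟨L.mkContinuous C ?_, ?_, ?_⟩
  · intro a
    exact lp.norm_le_of_forall_sum_le (by norm_num) (by positivity) (key a)
  · intro a k
    rfl
  · exact LinearMap.mkContinuous_norm_le _ hC _

lemma isUnit_conj {A : Type*} [NormedRing A] [CompleteSpace A] {D E X Y : A}
    (hDE : D * E = 1) (hED : E * D = 1) (h : D * X = Y * D) (hY : ‖Y‖ < 1) : IsUnit (1 - X) := by
  have h1 : 1 - X = E * (1 - Y) * D := by
    have : X = E * Y * D := by
      rw [mul_assoc, ← h, ← mul_assoc, hED, one_mul]
    rw [mul_sub, sub_mul, mul_one, hED, ← this]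
  rw [h1]
  have hD : IsUnit D := ⟨⟨D, E, hDE, hED⟩, rfl⟩
  have hE : IsUnit E := ⟨⟨E, D, hED, hDE⟩, rfl⟩
  exact (hE.mul (isUnit_one_sub_of_norm_lt_one hY)).mul hD

/-- surjective with `n`-dimensional kernel -/
def Good {V : Type*} [AddCommGroup V] [Module ℂ V] (n : ℕ) (T : V →ₗ[ℂ] V) : Prop :=
  Function.Surjective T ∧ Module.rank ℂ (LinearMap.ker T) = n

lemma Good.comp {V : Type*} [AddCommGroup V] [Module ℂ V] {n k : ℕ} {T U : V →ₗ[ℂ] V}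
    (hT : Good n T) (hU : Good k U) : Good (n + k) (T ∘ₗ U) := by
  refine ⟨by simpa using hT.1.comp hU.1, ?_⟩
  let R : LinearMap.ker (T ∘ₗ U) →ₗ[ℂ] LinearMap.ker T :=
    U.restrict (p := LinearMap.ker (T ∘ₗ U)) (q := LinearMap.ker T) (fun x hx => by simpa using hx)
  have hR : Function.Surjective R := by
    rintro ⟨y, hy⟩
    obtain ⟨x, rfl⟩ := hU.1 y
    exact ⟨⟨x, by simpa using hy⟩, rfl⟩
  have e : LinearMap.ker R ≃ₗ[ℂ] LinearMap.ker U :=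
    { toFun := fun x => ⟨x.1.1, by
        have := x.2
        rw [LinearMap.mem_ker] at this
        exact congrArg Subtype.val this⟩
      map_add' := fun _ _ => rfl
      map_smul' := fun _ _ => rfl
      invFun := fun x => ⟨⟨x.1, by
        have := x.2
        rw [LinearMap.mem_ker] at this
        simp [this]⟩, by
          have := x.2
          rw [LinearMap.mem_ker] at this
          rw [LinearMap.mem_ker]
          exact Subtype.ext this⟩
      left_inv := fun _ => rfl
      right_inv := fun _ => rfl }
  have := LinearMap.rank_range_add_rank_ker R
  rw [LinearMap.range_eq_top.2 hR, rank_top, e.rank_eq, hT.2, hU.2] at this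
  rw [← this]
  push_cast
  rfl

lemma Good.of_isUnit {T : H2 →L[ℂ] H2} (h : IsUnit T) : Good 0 T.toLinearMap := by
  obtain ⟨u, rfl⟩ := h
  have h1 : ∀ x, (↑u⁻¹ : H2 →L[ℂ] H2) ((u : H2 →L[ℂ] H2) x) = x := fun x => by
    rw [← clm_mul, Units.inv_mul]; rfl
  have h2 : ∀ x, (u : H2 →L[ℂ] H2) ((↑u⁻¹ : H2 →L[ℂ] H2) x) = x := fun x => by
    rw [← clm_mul, Units.mul_inv]; rfl
  refine ⟨fun y => ⟨_, h2 y⟩, ?_⟩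
  have : LinearMap.ker (u : H2 →L[ℂ] H2).toLinearMap = ⊥ := by
    rw [LinearMap.ker_eq_bot]
    exact Function.LeftInverse.injective h1
  rw [this]
  simp

lemma Good.mul {n k : ℕ} {T U : H2 →L[ℂ] H2} (hT : Good n T.toLinearMap)
    (hU : Good k U.toLinearMap) : Good (n + k) (T * U).toLinearMap := hT.comp hU

lemma betaSeq_zero (w : ℕ → ℝ) : betaSeq w 0 = 1 := by simp [betaSeq]

lemma betaSeq_succ (w : ℕ → ℝ) (k : ℕ) : betaSeq w (k + 1) = betaSeq w k * w (k + 1) := by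
  simp [betaSeq, Finset.prod_Icc_succ_top]

lemma betaSeq_pos {w : ℕ → ℝ} (hpos : ∀ k, 1 ≤ k → 0 < w k) (k : ℕ) : 0 < betaSeq w k :=
  Finset.prod_pos fun j hj => hpos j (Finset.mem_Icc.1 hj).1

lemma summable_beta {w : ℕ → ℝ} (hpos : ∀ k, 1 ≤ k → 0 < w k)
    (hlim : Tendsto w atTop (nhds 1)) {r : ℝ} (h0 : 0 < r) (h1 : r < 1) :
    Summable fun k => (betaSeq w k)⁻¹ * r ^ k := by
  refine summable_of_ratio_test_tendsto_lt_one (l := r) h1 ?_ ?_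
  · exact Eventually.of_forall fun k => by
      have := betaSeq_pos hpos k
      positivity
  · have h : Tendsto (fun k => (w (k + 1))⁻¹ * r) atTop (nhds ((1:ℝ)⁻¹ * r)) :=
      ((hlim.comp (tendsto_add_atTop_nat 1)).inv₀ one_ne_zero).mul_const r
    simp only [inv_one, one_mul] at h
    refine h.congr fun k => ?_
    have hb := betaSeq_pos hpos k
    have hw := hpos (k + 1) (by omega)
    rw [betaSeq_succ, Real.norm_of_nonneg (by positivity), Real.norm_of_nonneg (by positivity)]
    field_simp
    ring

lemma summable_rep {w : ℕ → ℝ} (hpos : ∀ k, 1 ≤ k → 0 < w k)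
    (hlim : Tendsto w atTop (nhds 1)) (a : H2) {r : ℝ} (h0 : 0 < r) (h1 : r < 1) :
    Summable fun k => ‖a k / (betaSeq w k : ℂ)‖ * r ^ k := by
  refine Summable.of_nonneg_of_le (fun k => by positivity) (fun k => ?_)
    ((summable_beta hpos hlim h0 h1).mul_left ‖a‖)
  have hb := betaSeq_pos hpos k
  rw [norm_div, Complex.norm_real, Real.norm_of_nonneg hb.le, div_eq_mul_inv, mul_assoc]
  gcongr
  exact lp.norm_apply_le_norm (by norm_num) a k

lemma summable_rep' {w : ℕ → ℝ} (hpos : ∀ k, 1 ≤ k → 0 < w k)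
    (hlim : Tendsto w atTop (nhds 1)) (a : H2) {z : ℂ} (hz : z ∈ unitDisk) :
    Summable fun k => (a k / (betaSeq w k : ℂ)) * z ^ k := by
  have hz' : ‖z‖ < 1 := by simpa [unitDisk] using hz
  obtain ⟨r, hr, hr1⟩ := exists_between hz'
  have hr0 : 0 < r := (norm_nonneg z).trans_lt hr
  refine Summable.of_norm_bounded (summable_rep hpos hlim a hr0 hr1) fun k => ?_
  rw [norm_mul, norm_pow]
  gcongr

lemma repFun_sub {w : ℕ → ℝ} (hpos : ∀ k, 1 ≤ k → 0 < w k)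
    (hlim : Tendsto w atTop (nhds 1)) (a b : H2) {z : ℂ} (hz : z ∈ unitDisk) :
    repFun (betaSeq w) (a - b) z = repFun (betaSeq w) a z - repFun (betaSeq w) b z := by
  unfold repFun
  rw [← (summable_rep' hpos hlim a hz).tsum_sub (summable_rep' hpos hlim b hz)]
  refine tsum_congr fun k => ?_
  simp
  ring

lemma repFun_smul (β : ℕ → ℝ) (c : ℂ) (a : H2) (z : ℂ) :
    repFun β (c • a) z = c * repFun β a z := by
  unfold repFun
  rw [← tsum_mul_left]
  refine tsum_congr fun k => ?_
  simp
  ring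

lemma repFun_zero_right (β : ℕ → ℝ) (a : H2) : repFun β a 0 = a 0 / β 0 := by
  unfold repFun
  rw [tsum_eq_single 0]
  · simp
  · intro k hk
    simp [hk]

lemma repFun_inj {w : ℕ → ℝ} (hpos : ∀ k, 1 ≤ k → 0 < w k)
    (hlim : Tendsto w atTop (nhds 1)) {a b : H2}
    (h : ∀ z ∈ unitDisk, repFun (betaSeq w) a z = repFun (betaSeq w) b z) : a = b := by
  have main : ∀ a : H2, (∀ z ∈ unitDisk, repFun (betaSeq w) a z = 0) → a = 0 := by
    intro a ha
    let p := FormalMultilinearSeries.ofScalars ℂ (fun k => a k / (betaSeq w k : ℂ))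
    have hrad : (2⁻¹ : NNReal) ≤ p.radius := by
      apply FormalMultilinearSeries.le_radius_of_summable_norm
      have := summable_rep hpos hlim a (r := 2⁻¹) (by norm_num) (by norm_num)
      simpa [p, FormalMultilinearSeries.ofScalars_norm] using this
    have hp : HasFPowerSeriesAt (fun _ : ℂ => (0:ℂ)) p 0 := by
      have h1 := p.hasFPowerSeriesOnBall (lt_of_lt_of_le (by simp) hrad)
      refine h1.hasFPowerSeriesAt.congr ?_
      have : Metric.ball (0:ℂ) 1 ∈ nhds (0:ℂ) := Metric.ball_mem_nhds _ one_pos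
      filter_upwards [this] with z hz
      rw [← ha z hz]
      simp [FormalMultilinearSeries.sum, p, repFun, mul_comm]
    have hp0 := hp.eq_zero
    ext k
    have := congrArg (fun q => q.coeff k) hp0
    have hz : (0 : FormalMultilinearSeries ℂ ℂ ℂ).coeff k = 0 := rfl
    simp only [p, FormalMultilinearSeries.coeff_ofScalars, hz] at this
    have hb : (betaSeq w k : ℂ) ≠ 0 := by exact_mod_cast (betaSeq_pos hpos k).ne'
    have h3 : a k = 0 := (div_eq_zero_iff.1 this).resolve_right hb
    rw [h3]
    simp
  rw [← sub_eq_zero]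
  refine main _ fun z hz => ?_
  rw [repFun_sub hpos hlim a b hz, h z hz, sub_self]

lemma exists_dataD {w : ℕ → ℝ} (hpos : ∀ k, 1 ≤ k → 0 < w k)
    (hlim : Tendsto w atTop (nhds 1)) {x : ℝ} (hx0 : 0 ≤ x) (hx : x < 1) :
    ∃ (v d : ℕ → ℝ) (D E : H2 →L[ℂ] H2) (ρ : ℝ), ρ < 1 ∧ 0 ≤ ρ ∧ (∀ k, 0 < v k) ∧
      (∀ k, x * v k ≤ ρ) ∧ (∀ k, x * (v k)⁻¹ ≤ ρ) ∧
      D * E = 1 ∧ E * D = 1 ∧ (∀ (a : H2) k, D a k = d k * a k) ∧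
      (∀ k, d (k + 1) * w (k + 1) = v (k + 1) * d k) := by
  obtain ⟨ρ, hρ, hρ1⟩ := exists_between hx
  have e1 : ∀ᶠ k in atTop, x * w k < ρ := by
    have := hlim.const_mul x
    rw [mul_one] at this
    exact this.eventually_lt_const hρ
  have e2 : ∀ᶠ k in atTop, x * (w k)⁻¹ < ρ := by
    have := (hlim.inv₀ one_ne_zero).const_mul x
    rw [inv_one, mul_one] at this
    exact this.eventually_lt_const hρ
  obtain ⟨N, hN⟩ := eventually_atTop.1 (e1.and e2)
  let v : ℕ → ℝ := fun k => if N < k then w k else 1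
  have hv : ∀ k, 0 < v k := by
    intro k
    by_cases h : N < k
    · simpa [v, h] using hpos k (by omega)
    · simp [v, h]
  let d : ℕ → ℝ := fun k => betaSeq v k / betaSeq w k
  have hd : ∀ k, 0 < d k := fun k => div_pos (betaSeq_pos (fun j _ => hv j) k) (betaSeq_pos hpos k)
  have hrec : ∀ k, d (k + 1) * w (k + 1) = v (k + 1) * d k := by
    intro k
    have h1 := betaSeq_pos hpos k
    have h2 := hpos (k + 1) (by omega)
    simp only [d, betaSeq_succ]
    field_simp
  have hconst : ∀ k, N ≤ k → d k = d N := by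
    intro k hk
    induction k, hk using Nat.le_induction with
    | base => rfl
    | succ k hk ih =>
      have h := hrec k
      have h2 := hpos (k + 1) (by omega)
      have h3 : v (k + 1) = w (k + 1) := by simp [v, Nat.lt_succ_of_le hk]
      rw [h3, mul_comm] at h
      rw [← ih]
      exact mul_left_cancel₀ h2.ne' h
  have ht : Tendsto d atTop (nhds (d N)) :=
    tendsto_const_nhds.congr' (eventually_atTop.2 ⟨N, fun k hk => (hconst k hk).symm⟩)
  obtain ⟨C1, hC1⟩ := ht.bddAbove_range
  obtain ⟨C2, hC2⟩ := (ht.inv₀ (hd N).ne').bddAbove_range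
  have hC1' : ∀ k, d k ≤ C1 := fun k => hC1 ⟨k, rfl⟩
  have hC2' : ∀ k, (d k)⁻¹ ≤ C2 := fun k => hC2 ⟨k, rfl⟩
  obtain ⟨D, hD, -⟩ := exists_wop id (fun k => (d k : ℂ)) C1 ((hd 0).le.trans (hC1' 0))
    (fun k => by simpa [abs_of_pos (hd k)] using hC1' k) (fun k l _ _ h => h)
  obtain ⟨E, hE, -⟩ := exists_wop id (fun k => (d k : ℂ)⁻¹) C2
    ((inv_pos.2 (hd 0)).le.trans (hC2' 0))
    (fun k => by simpa [abs_of_pos (hd k)] using hC2' k) (fun k l _ _ h => h)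
  have hdc : ∀ k, (d k : ℂ) ≠ 0 := fun k => by exact_mod_cast (hd k).ne'
  refine ⟨v, d, D, E, ρ, hρ1, hx0.trans hρ.le, hv, ?_, ?_, ?_, ?_, hD, hrec⟩
  · intro k
    by_cases h : N < k
    · simpa [v, h] using (hN k (by omega)).1.le
    · simpa [v, h] using hρ.le
  · intro k
    by_cases h : N < k
    · simpa [v, h] using (hN k (by omega)).2.le
    · simpa [v, h] using hρ.le
  · ext a k
    rw [clm_mul, hD, hE]
    simp [hdc k]
  · ext a k
    rw [clm_mul, hE, hD]
    simp [hdc k]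

lemma isUnit_M {w : ℕ → ℝ} (hpos : ∀ k, 1 ≤ k → 0 < w k)
    (hlim : Tendsto w atTop (nhds 1)) (M : H2 →L[ℂ] H2) (hM0 : ∀ a, M a 0 = 0)
    (hM : ∀ a k, M a (k + 1) = w (k + 1) * a k) {ζ : ℂ} (hζ : ‖ζ‖ < 1) :
    IsUnit (1 - ζ • M) := by
  obtain ⟨v, d, D, E, ρ, hρ, hρ0, hv, hv1, hv2, hDE, hED, hD, hrec⟩ :=
    exists_dataD hpos hlim (norm_nonneg ζ) hζ
  obtain ⟨Y, hY, hYn⟩ := exists_wop (fun k => k - 1) (fun k => if k = 0 then 0 else ζ * v k) ρ hρ0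
    (fun k => by
      by_cases h : k = 0
      · simpa [h] using hρ0
      · simpa [h, abs_of_pos (hv k)] using hv1 k)
    (fun k l hk hl h => by
      have hk' : k ≠ 0 := by rintro rfl; simp at hk
      have hl' : l ≠ 0 := by rintro rfl; simp at hl
      omega)
  refine isUnit_conj hDE hED (Y := Y) ?_ (hYn.trans_lt hρ)
  ext a k
  rw [clm_mul, clm_mul, hD, hY]
  cases k with
  | zero => simp [hM0]
  | succ k =>
    have : (d (k + 1) : ℂ) * w (k + 1) = v (k + 1) * d k := by exact_mod_cast hrec k
    simp [hM, hD]
    linear_combination ζ * a k * this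

lemma isUnit_S {w : ℕ → ℝ} (hpos : ∀ k, 1 ≤ k → 0 < w k)
    (hlim : Tendsto w atTop (nhds 1)) (S : H2 →L[ℂ] H2)
    (hS : ∀ a k, w (k + 1) * S a k = a (k + 1)) {ζ : ℂ} (hζ : ‖ζ‖ < 1) :
    IsUnit (1 - ζ • S) := by
  obtain ⟨v, d, D, E, ρ, hρ, hρ0, hv, hv1, hv2, hDE, hED, hD, hrec⟩ :=
    exists_dataD hpos hlim (norm_nonneg ζ) hζ
  obtain ⟨Y, hY, hYn⟩ := exists_wop (fun k => k + 1) (fun k => ζ * (v (k + 1) : ℂ)⁻¹) ρ hρ0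
    (fun k => by simpa [abs_of_pos (hv (k + 1))] using hv2 (k + 1))
    (fun k l hk hl h => by simpa using h)
  refine isUnit_conj hDE hED (Y := Y) ?_ (hYn.trans_lt hρ)
  ext a k
  rw [clm_mul, clm_mul, hD, hY, hD, ← hS a k]
  have : (d (k + 1) : ℂ) * w (k + 1) = v (k + 1) * d k := by exact_mod_cast hrec k
  have hv' : (v (k + 1) : ℂ) ≠ 0 := by exact_mod_cast (hv (k + 1)).ne'
  simp
  field_simp
  linear_combination (-ζ) * ((S a : H2) k) * this

lemma exists_M {w : ℕ → ℝ} (hlim : Tendsto w atTop (nhds 1)) :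
    ∃ M : H2 →L[ℂ] H2, (∀ a, M a 0 = 0) ∧ (∀ a k, M a (k + 1) = w (k + 1) * a k) := by
  obtain ⟨C, hC⟩ := hlim.norm.bddAbove_range
  have hC' : ∀ k, ‖w k‖ ≤ C := fun k => hC ⟨k, rfl⟩
  have hC0 : 0 ≤ C := (norm_nonneg _).trans (hC' 0)
  obtain ⟨M, hM, -⟩ := exists_wop (fun k => k - 1) (fun k => if k = 0 then 0 else (w k : ℂ)) C hC0
    (fun k => by
      by_cases h : k = 0
      · simpa [h] using hC0
      · simpa [h] using hC' k)
    (fun k l hk hl h => by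
      have hk' : k ≠ 0 := by rintro rfl; simp at hk
      have hl' : l ≠ 0 := by rintro rfl; simp at hl
      omega)
  exact ⟨M, fun a => by simp [hM], fun a k => by simp [hM]⟩

lemma repFun_M {w : ℕ → ℝ} (hpos : ∀ k, 1 ≤ k → 0 < w k)
    (hlim : Tendsto w atTop (nhds 1)) (M : H2 →L[ℂ] H2) (hM0 : ∀ a, M a 0 = 0)
    (hM : ∀ a k, M a (k + 1) = w (k + 1) * a k) (a : H2) {z : ℂ} (hz : z ∈ unitDisk) :
    repFun (betaSeq w) (M a) z = z * repFun (betaSeq w) a z := by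
  unfold repFun
  rw [(summable_rep' hpos hlim (M a) hz).tsum_eq_zero_add, hM0, ← tsum_mul_left]
  simp only [zero_div, zero_mul, zero_add]
  refine tsum_congr fun k => ?_
  have h1 : (betaSeq w k : ℂ) ≠ 0 := by exact_mod_cast (betaSeq_pos hpos k).ne'
  have h2 : (w (k + 1) : ℂ) ≠ 0 := by exact_mod_cast (hpos (k + 1) (by omega)).ne'
  rw [hM, betaSeq_succ]
  push_cast
  field_simp
  ring

lemma S_coord {w : ℕ → ℝ} (hpos : ∀ k, 1 ≤ k → 0 < w k)
    (hlim : Tendsto w atTop (nhds 1)) (M : H2 →L[ℂ] H2) (hM0 : ∀ a, M a 0 = 0)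
    (hM : ∀ a k, M a (k + 1) = w (k + 1) * a k) (S : H2 →L[ℂ] H2) (hS : RepS (betaSeq w) S)
    (a : H2) (k : ℕ) : w (k + 1) * S a k = a (k + 1) := by
  have h : M (S a) = a - lp.single 2 0 (a 0) := by
    refine repFun_inj hpos hlim fun z hz => ?_
    have h0 : repFun (betaSeq w) (lp.single 2 0 (a 0)) z = a 0 := by
      unfold repFun
      rw [tsum_eq_single 0]
      · simp [betaSeq_zero]
      · intro k hk
        simp [hk]
    rw [repFun_M hpos hlim M hM0 hM _ hz, repFun_sub hpos hlim _ _ hz, h0]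
    by_cases hz0 : z = 0
    · subst hz0
      simp [repFun_zero_right, betaSeq_zero]
    · rw [hS a z hz hz0, repFun_zero_right, betaSeq_zero]
      field_simp
      simp
  rw [← hM, h]
  simp

lemma RepMul.mul {β : ℕ → ℝ} {f g : ℂ → ℂ} {T U : H2 →L[ℂ] H2} (hT : RepMul β f T)
    (hU : RepMul β g U) : RepMul β (fun z => f z * g z) (T * U) := by
  intro a z hz
  rw [clm_mul, hT _ z hz, hU _ z hz, mul_assoc]

open Polynomial in
/-- numerator of `B̄` -/
def pP {m : ℕ} (zs : Fin m → ℂ) : Polynomial ℂ := ∏ j, (C ((starRingEnd ℂ) (zs j)) - X)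

open Polynomial in
/-- denominator of `B̄` -/
def qP {m : ℕ} (zs : Fin m → ℂ) : Polynomial ℂ := ∏ j, (1 - C (zs j) * X)

open Polynomial in
lemma aeval_num (S : H2 →L[ℂ] H2) (c : ℂ) : aeval S (C c - X) = c • (1 : H2 →L[ℂ] H2) - S := by
  rw [map_sub, aeval_X, aeval_C, Algebra.algebraMap_eq_smul_one]

open Polynomial in
lemma aeval_den (S : H2 →L[ℂ] H2) (c : ℂ) : aeval S (1 - C c * X) = (1 : H2 →L[ℂ] H2) - c • S := by
  rw [map_sub, map_mul, aeval_X, aeval_C, Algebra.algebraMap_eq_smul_one, map_one, smul_mul_assoc,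
    one_mul]

lemma isUnit_qP {S : H2 →L[ℂ] H2} (hU : ∀ ζ : ℂ, ‖ζ‖ < 1 → IsUnit (1 - ζ • S)) :
    ∀ {m : ℕ} (zs : Fin m → ℂ), (∀ j, ‖zs j‖ < 1) → IsUnit (Polynomial.aeval S (qP zs))
  | 0, zs, _ => by simp [qP]
  | m + 1, zs, h => by
    have ih := isUnit_qP hU (fun j : Fin m => zs j.succ) (fun j => h _)
    rw [qP, Fin.prod_univ_succ, map_mul, aeval_den]
    exact (hU _ (h 0)).mul ih

lemma blaschke_mul_q {S : H2 →L[ℂ] H2} (hU : ∀ ζ : ℂ, ‖ζ‖ < 1 → IsUnit (1 - ζ • S)) :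
    ∀ {m : ℕ} (zs : Fin m → ℂ), (∀ j, ‖zs j‖ < 1) →
      blaschkeBarOp zs S * Polynomial.aeval S (qP zs) = Polynomial.aeval S (pP zs)
  | 0, zs, _ => by simp [qP, pP, blaschkeBarOp]
  | m + 1, zs, h => by
    have ih := blaschke_mul_q hU (fun j : Fin m => zs j.succ) (fun j => h _)
    have hq : qP zs = qP (fun j : Fin m => zs j.succ) *
        (1 - Polynomial.C (zs 0) * Polynomial.X) := by
      rw [qP, Fin.prod_univ_succ, mul_comm, qP]
    have hp : pP zs = (Polynomial.C ((starRingEnd ℂ) (zs 0)) - Polynomial.X) *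
        pP (fun j : Fin m => zs j.succ) := by
      rw [pP, Fin.prod_univ_succ, pP]
    have hb : blaschkeBarOp zs S = ((starRingEnd ℂ) (zs 0) • (1 : H2 →L[ℂ] H2) - S) *
      Ring.inverse ((1 : H2 →L[ℂ] H2) - zs 0 • S) *
        blaschkeBarOp (fun j : Fin m => zs j.succ) S := by
      simp [blaschkeBarOp, List.ofFn_succ]
    rw [hb, hq, hp, map_mul, mul_assoc, ← mul_assoc (blaschkeBarOp _ S), ih, ← map_mul, mul_comm,
      map_mul, map_mul, ← mul_assoc, aeval_num, aeval_den, mul_assoc _ (Ring.inverse _),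
      Ring.inverse_mul_cancel _ (hU _ (h 0)), mul_one]

lemma exists_Q {w : ℕ → ℝ} (hpos : ∀ k, 1 ≤ k → 0 < w k)
    (hlim : Tendsto w atTop (nhds 1)) {M S : H2 →L[ℂ] H2} (hSM : S * M = 1)
    (hMrep : ∀ (a : H2) (z : ℂ), z ∈ unitDisk →
      repFun (betaSeq w) (M a) z = z * repFun (betaSeq w) a z)
    (hU : ∀ ζ : ℂ, ‖ζ‖ < 1 → IsUnit (1 - ζ • S)) (hUM : ∀ ζ : ℂ, ‖ζ‖ < 1 → IsUnit (1 - ζ • M)) :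
    ∀ {m : ℕ} (zs : Fin m → ℂ), (∀ j, ‖zs j‖ < 1) →
      ∃ Q : H2 →L[ℂ] H2, RepMul (betaSeq w) (fun z => ∏ j, mobius (zs j) z) Q ∧
        blaschkeBarOp zs S * Q = 1
  | 0, zs, _ => ⟨1, by intro a z _; simp, by simp [blaschkeBarOp]⟩
  | m + 1, zs, h => by
    obtain ⟨Q, hQ1, hQ2⟩ := exists_Q hpos hlim hSM hMrep hU hUM
      (fun j : Fin m => zs j.succ) (fun j => h _)
    have hz0 := h 0
    set z0 := zs 0 with hz0def
    have hc0 : ‖(starRingEnd ℂ) z0‖ < 1 := by simpa using hz0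
    obtain ⟨u, hu⟩ := hUM _ hc0
    have hb : blaschkeBarOp zs S = ((starRingEnd ℂ) z0 • (1 : H2 →L[ℂ] H2) - S) *
      Ring.inverse ((1 : H2 →L[ℂ] H2) - z0 • S) *
        blaschkeBarOp (fun j : Fin m => zs j.succ) S := by
      simp [blaschkeBarOp, List.ofFn_succ, hz0def]
    let P : H2 →L[ℂ] H2 := (z0 • 1 - M) * (↑u⁻¹ : H2 →L[ℂ] H2)
    have hP : RepMul (betaSeq w) (mobius z0) P := by
      intro a z hz
      have hz' : ‖z‖ < 1 := by simpa [unitDisk] using hz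
      have hne : 1 - (starRingEnd ℂ) z0 * z ≠ 0 := by
        intro h0
        have h1 : ‖(starRingEnd ℂ) z0 * z‖ = 1 := by
          rw [← sub_eq_zero.1 h0, norm_one]
        rw [norm_mul] at h1
        have := mul_lt_one_of_nonneg_of_lt_one_left (norm_nonneg _) hc0 hz'.le
        linarith
      obtain ⟨b, rfl⟩ : ∃ b, (u : H2 →L[ℂ] H2) b = a :=
        ⟨(↑u⁻¹ : H2 →L[ℂ] H2) a, by rw [← clm_mul, Units.mul_inv]; rfl⟩
      have h1 : P ((u : H2 →L[ℂ] H2) b) = z0 • b - M b := by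
        simp only [P]
        rw [← clm_mul, mul_assoc, Units.inv_mul, mul_one]
        rfl
      have h2 : (u : H2 →L[ℂ] H2) b = b - (starRingEnd ℂ) z0 • M b := by
        rw [hu]; rfl
      rw [h1, h2, repFun_sub hpos hlim _ _ hz, repFun_sub hpos hlim _ _ hz, repFun_smul,
        repFun_smul, hMrep _ _ hz, mobius, div_mul_eq_mul_div, eq_div_iff hne]
      ring
    refine ⟨Q * P, ?_, ?_⟩
    · have := hQ1.mul hP
      intro a z hz
      rw [this a z hz]
      simp only [Fin.prod_univ_succ, ← hz0def]
      ring
    · rw [hb, mul_assoc, ← mul_assoc _ Q P, hQ2, one_mul]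
      have e1 : z0 • (1 : H2 →L[ℂ] H2) - M = -((1 - z0 • S) * M) := by
        rw [sub_mul, smul_mul_assoc, hSM, one_mul, neg_sub]
      have e2 : ((starRingEnd ℂ) z0 • (1 : H2 →L[ℂ] H2) - S) * M = -(u : H2 →L[ℂ] H2) := by
        rw [sub_mul, smul_mul_assoc, hSM, one_mul, hu, neg_sub]
      simp only [P]
      rw [e1, neg_mul, mul_neg, mul_assoc _ (Ring.inverse _), ← mul_assoc (Ring.inverse _),
        ← mul_assoc (Ring.inverse _), Ring.inverse_mul_cancel _ (hU _ hz0), one_mul, ← mul_assoc, e2,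
        neg_mul, Units.mul_inv, neg_neg]

lemma normSq_key (z ζ : ℂ) : normSq (1 - z * ζ) - normSq ((starRingEnd ℂ) z - ζ)
    = (1 - normSq z) * (1 - normSq ζ) := by
  simp [normSq_apply]
  ring

lemma norm_key_lt {z ζ : ℂ} (hz : ‖z‖ < 1) (hζ : ‖ζ‖ < 1) :
    ‖(starRingEnd ℂ) z - ζ‖ < ‖1 - z * ζ‖ := by
  have h := normSq_key z ζ
  simp only [normSq_eq_norm_sq] at h
  have h1 : 0 < (1 - ‖z‖ ^ 2) * (1 - ‖ζ‖ ^ 2) := by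
    have := norm_nonneg z
    have := norm_nonneg ζ
    apply mul_pos <;> nlinarith
  exact lt_of_pow_lt_pow_left₀ 2 (norm_nonneg _) (by linarith)

lemma norm_key_le {z ζ : ℂ} (hz : ‖z‖ < 1) (hζ : 1 ≤ ‖ζ‖) :
    ‖1 - z * ζ‖ ≤ ‖(starRingEnd ℂ) z - ζ‖ := by
  have h := normSq_key z ζ
  simp only [normSq_eq_norm_sq] at h
  have h1 : 0 ≤ (1 - ‖z‖ ^ 2) * (‖ζ‖ ^ 2 - 1) := by
    have := norm_nonneg z
    have := norm_nonneg ζ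
    apply mul_nonneg <;> nlinarith
  exact le_of_sq_le_sq (by linarith) (norm_nonneg _)

lemma eval_pP {m : ℕ} (zs : Fin m → ℂ) (ζ : ℂ) :
    (pP zs).eval ζ = ∏ j, ((starRingEnd ℂ) (zs j) - ζ) := by
  simp [pP, Polynomial.eval_prod]

lemma eval_qP {m : ℕ} (zs : Fin m → ℂ) (ζ : ℂ) :
    (qP zs).eval ζ = ∏ j, (1 - zs j * ζ) := by
  simp [qP, Polynomial.eval_prod]

lemma norm_p_lt_q {m : ℕ} (hm : 0 < m) (zs : Fin m → ℂ) (h : ∀ j, ‖zs j‖ < 1) {ζ : ℂ}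
    (hζ : ‖ζ‖ < 1) : ‖(pP zs).eval ζ‖ < ‖(qP zs).eval ζ‖ := by
  rw [eval_pP, eval_qP, norm_prod, norm_prod]
  by_cases h0 : ∃ j, (starRingEnd ℂ) (zs j) - ζ = 0
  · obtain ⟨j, hj⟩ := h0
    rw [Finset.prod_eq_zero (Finset.mem_univ j) (by rw [hj, norm_zero])]
    exact Finset.prod_pos fun j _ => (norm_nonneg _).trans_lt (norm_key_lt (h j) hζ)
  · push Not at h0
    refine Finset.prod_lt_prod_of_nonempty (fun j _ => norm_pos_iff.2 (h0 j))
      (fun j _ => norm_key_lt (h j) hζ) ⟨⟨0, hm⟩, Finset.mem_univ _⟩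

lemma root_in_disk {m : ℕ} (zs : Fin m → ℂ) (h : ∀ j, ‖zs j‖ < 1) {ω ζ : ℂ}
    (hω : ‖ω‖ < 1) (hr : (pP zs - Polynomial.C ω * qP zs).eval ζ = 0) : ‖ζ‖ < 1 := by
  by_contra! hζ
  have hle : ‖(qP zs).eval ζ‖ ≤ ‖(pP zs).eval ζ‖ := by
    rw [eval_pP, eval_qP, norm_prod, norm_prod]
    exact Finset.prod_le_prod (fun _ _ => norm_nonneg _) fun j _ => norm_key_le (h j) hζ
  have hp : 0 < ‖(pP zs).eval ζ‖ := by
    rw [eval_pP, norm_pos_iff, Finset.prod_ne_zero_iff]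
    intro j _ h0
    have : ‖ζ‖ = ‖zs j‖ := by rw [← sub_eq_zero.1 h0]; simp
    linarith [h j]
  simp only [Polynomial.eval_sub, Polynomial.eval_mul, Polynomial.eval_C] at hr
  have : ‖(pP zs).eval ζ‖ = ‖ω‖ * ‖(qP zs).eval ζ‖ := by rw [sub_eq_zero.1 hr, norm_mul]
  nlinarith [norm_nonneg ω]

open Polynomial in
lemma natDegree_r {m : ℕ} (zs : Fin m → ℂ) (h : ∀ j, ‖zs j‖ < 1) {ω : ℂ}
    (hω : ‖ω‖ < 1) : (pP zs - C ω * qP zs).natDegree = m := by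
  have d1 : ∀ c : ℂ, (C c - X).natDegree ≤ 1 := fun c => by compute_degree
  have d2 : ∀ c : ℂ, (1 - C c * X).natDegree ≤ 1 := fun c => by compute_degree
  have hp : (pP zs).natDegree ≤ m := by
    refine (natDegree_prod_le _ _).trans ((Finset.sum_le_sum fun j _ => d1 _).trans (by simp))
  have hq : (qP zs).natDegree ≤ m := by
    refine (natDegree_prod_le _ _).trans ((Finset.sum_le_sum fun j _ => d2 _).trans (by simp))
  have cp : (pP zs).coeff m = (-1) ^ m := by
    have := coeff_prod_of_natDegree_le (s := (Finset.univ : Finset (Fin m)))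
      (fun j => C ((starRingEnd ℂ) (zs j)) - X) 1 (fun j _ => d1 _)
    simpa [pP, coeff_C] using this
  have cq : (qP zs).coeff m = ∏ j, (-zs j) := by
    have := coeff_prod_of_natDegree_le (s := (Finset.univ : Finset (Fin m)))
      (fun j => 1 - C (zs j) * X) 1 (fun j _ => d2 _)
    simpa [qP, coeff_one] using this
  refine natDegree_eq_of_le_of_coeff_ne_zero ?_ ?_
  · refine (natDegree_sub_le _ _).trans (max_le hp ?_)
    exact (natDegree_C_mul_le _ _).trans hq
  · rw [coeff_sub, coeff_C_mul, cp, cq]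
    intro h0
    have h1 : ‖ω * ∏ j, (-zs j)‖ = 1 := by
      rw [← sub_eq_zero.1 h0]; simp
    rw [norm_mul, norm_prod] at h1
    have h2 : ∏ j, ‖-zs j‖ ≤ 1 :=
      Finset.prod_le_one (fun _ _ => norm_nonneg _) fun j _ => by simpa using (h j).le
    have h3 := mul_lt_one_of_nonneg_of_lt_one_left (norm_nonneg _) hω h2
    linarith

open Polynomial in
lemma good_prod {S : H2 →L[ℂ] H2} (hS : ∀ ζ : ℂ, ‖ζ‖ < 1 → Good 1 (S - ζ • 1).toLinearMap)
    (s : Multiset ℂ) : (∀ ζ ∈ s, ‖ζ‖ < 1) →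
      Good (Multiset.card s) (aeval S ((s.map fun a => X - C a).prod)).toLinearMap := by
  induction s using Multiset.induction_on with
  | empty =>
    intro _
    simp only [Multiset.map_zero, Multiset.prod_zero, map_one, Multiset.card_zero]
    exact Good.of_isUnit isUnit_one
  | cons a s ih =>
    intro h
    have h1 := hS a (h a (Multiset.mem_cons_self a s))
    have h2 := ih fun ζ hζ => h ζ (Multiset.mem_cons_of_mem hζ)
    have h3 := h1.mul h2
    rw [Multiset.map_cons, Multiset.prod_cons, map_mul, Multiset.card_cons, add_comm, map_sub,
      aeval_X, aeval_C, Algebra.algebraMap_eq_smul_one]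
    exact h3

open Polynomial in
lemma aeval_eigen {S : H2 →L[ℂ] H2} {ζ : ℂ} {k : H2} (hk : S k = ζ • k) (p : Polynomial ℂ) :
    aeval S p k = p.eval ζ • k := by
  induction p using Polynomial.induction_on' with
  | add p q hp hq => rw [map_add, add_apply, hp, hq, eval_add, add_smul]
  | monomial n a =>
    rw [aeval_monomial, eval_monomial, clm_mul, Algebra.algebraMap_eq_smul_one]
    have : ∀ n : ℕ, (S ^ n) k = ζ ^ n • k := by
      intro n
      induction n with
      | zero => simp
      | succ n ih => rw [pow_succ, clm_mul, hk, map_smul, ih, smul_smul, pow_succ, mul_comm]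
    rw [this, mul_smul]
    rfl

lemma dense_eigen {w : ℕ → ℝ} (hpos : ∀ k, 1 ≤ k → 0 < w k) {M : H2 →L[ℂ] H2}
    (hM0 : ∀ a, M a 0 = 0) (hM : ∀ a k, M a (k + 1) = w (k + 1) * a k)
    (hUM : ∀ ζ : ℂ, ‖ζ‖ < 1 → IsUnit (1 - ζ • M)) (K : Submodule ℂ H2)
    (hK : IsClosed (K : Set H2))
    (h : ∀ (ζ : ℂ) (k : H2), ‖ζ‖ < 1 → k - ζ • M k = lp.single 2 0 1 → k ∈ K) : K = ⊤ := by
  let e0 : H2 := lp.single 2 0 1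
  let kf : ℂ → H2 := fun ζ => Ring.inverse (1 - ζ • M) e0
  have hkf : ∀ ζ : ℂ, ‖ζ‖ < 1 → kf ζ - ζ • M (kf ζ) = e0 := by
    intro ζ hζ
    have : ((1 - ζ • M) * Ring.inverse (1 - ζ • M)) e0 = e0 := by
      rw [Ring.mul_inverse_cancel _ (hUM ζ hζ)]; rfl
    exact this
  have hcont : ContinuousAt kf 0 := by
    have h1 : ContinuousAt (fun ζ : ℂ => Ring.inverse (1 - ζ • M)) 0 := by
      have h2 : ContinuousAt (Ring.inverse : (H2 →L[ℂ] H2) → _) (1 - (0:ℂ) • M) := by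
        have := NormedRing.inverse_continuousAt (1 : (H2 →L[ℂ] H2)ˣ)
        simpa using this
      exact ContinuousAt.comp (f := fun ζ : ℂ => 1 - ζ • M) h2 (by fun_prop)
    exact h1.clm_apply continuousAt_const
  have hk0 : kf 0 = e0 := by simp [kf]
  have hmem : ∀ n : ℕ, ∀ ζ : ℂ, ‖ζ‖ < 1 → (M ^ n) (kf ζ) ∈ K := by
    intro n
    induction n with
    | zero => intro ζ hζ; exact h ζ _ hζ (hkf ζ hζ)
    | succ n ih =>
      have hne : ∀ ζ : ℂ, ‖ζ‖ < 1 → ζ ≠ 0 → (M ^ (n + 1)) (kf ζ) ∈ K := by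
        intro ζ hζ hζ0
        have h1 : (M ^ (n + 1)) (kf ζ) = ζ⁻¹ • ((M ^ n) (kf ζ) - (M ^ n) (kf 0)) := by
          rw [← map_sub, hk0, ← hkf ζ hζ, sub_sub_cancel, map_smul, smul_smul,
            inv_mul_cancel₀ hζ0, one_smul, pow_succ, clm_mul]
        rw [h1]
        exact K.smul_mem _ (K.sub_mem (ih ζ hζ) (ih 0 (by simp)))
      intro ζ hζ
      by_cases hζ0 : ζ = 0
      · subst hζ0
        have hc : Tendsto (fun ζ => (M ^ (n + 1)) (kf ζ)) (𝓝[≠] (0:ℂ))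
            (nhds ((M ^ (n + 1)) (kf 0))) :=
          ((M ^ (n + 1)).continuous.continuousAt.comp hcont).tendsto.mono_left nhdsWithin_le_nhds
        refine hK.mem_of_tendsto hc ?_
        have hb : Metric.ball (0:ℂ) 1 ∈ 𝓝[≠] (0:ℂ) :=
          mem_nhdsWithin_of_mem_nhds (Metric.ball_mem_nhds _ one_pos)
        filter_upwards [hb, self_mem_nhdsWithin] with ζ h1 h2
        exact hne ζ (by simpa using h1) h2
      · exact hne ζ hζ hζ0
  have hpow : ∀ n : ℕ, (M ^ n) e0 = lp.single 2 n (betaSeq w n : ℂ) := by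
    intro n
    induction n with
    | zero => simp [betaSeq_zero, e0]
    | succ n ih =>
      rw [pow_succ', clm_mul, ih]
      ext k
      cases k with
      | zero => rw [hM0]; simp
      | succ k =>
        rw [hM, betaSeq_succ]
        by_cases hk : k = n
        · subst hk; simp [mul_comm]
        · simp [hk]
  have hsingle : ∀ (n : ℕ) (c : ℂ), (lp.single 2 n c : H2) ∈ K := by
    intro n c
    have h1 := hmem n 0 (by simp)
    rw [hk0, hpow] at h1
    have h2 := K.smul_mem (c / betaSeq w n) h1
    rw [← lp.single_smul] at h2
    have hb : (betaSeq w n : ℂ) ≠ 0 := by exact_mod_cast (betaSeq_pos hpos n).ne'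
    simpa [hb] using h2
  rw [eq_top_iff]
  intro a _
  have := lp.hasSum_single (by norm_num) a
  exact hK.mem_of_tendsto this (Eventually.of_forall fun s => K.sum_mem fun n _ => hsingle n _)

/-- Let `H²_β` come from a weight sequence `w_k → 1` and let
`B(z) = ∏_{j=1}^m (z_j - z)/(1 - conj z_j · z)` be a Blaschke product of order `m`.
With `S` the standard left inverse of `M_z` and `B̄(z) = conj (B (conj z))`, the
operator `B̄(S)` lies in the Cowen–Douglas class `B_m(𝔻)` and `B̄(S) ∘ B(M_z) = I`. -/
theorem statement6 (w : ℕ → ℝ) (hpos : ∀ k, 1 ≤ k → 0 < w k)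
    (hlim : Tendsto w atTop (nhds 1)) (m : ℕ) (hm : 0 < m)
    (zs : Fin m → ℂ) (hzs : ∀ j, zs j ∈ unitDisk)
    (B : ℂ → ℂ) (hB : ∀ z, B z = ∏ j, mobius (zs j) z)
    (S : H2 →L[ℂ] H2) (hS : RepS (betaSeq w) S)
    (TB : H2 →L[ℂ] H2) (hTB : RepMul (betaSeq w) B TB) :
    InCowenDouglas m unitDisk (blaschkeBarOp zs S) ∧
      blaschkeBarOp zs S * TB = 1 := by
  have hzs' : ∀ j, ‖zs j‖ < 1 := fun j => by simpa [unitDisk] using hzs j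
  obtain ⟨M, hM0, hM⟩ := exists_M hlim
  have hSc := S_coord hpos hlim M hM0 hM S hS
  have hwc : ∀ k : ℕ, (w (k + 1) : ℂ) ≠ 0 := fun k => by
    exact_mod_cast (hpos (k + 1) (by omega)).ne'
  have hSM : S * M = 1 := by
    ext a k
    rw [clm_mul]
    exact mul_left_cancel₀ (hwc k) (by rw [hSc, hM]; rfl)
  have hUS : ∀ ζ : ℂ, ‖ζ‖ < 1 → IsUnit (1 - ζ • S) := fun ζ hζ => isUnit_S hpos hlim S hSc hζ
  have hUM : ∀ ζ : ℂ, ‖ζ‖ < 1 → IsUnit (1 - ζ • M) := fun ζ hζ => isUnit_M hpos hlim M hM0 hM hζ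
  have hMrep : ∀ (a : H2) (z : ℂ), z ∈ unitDisk →
      repFun (betaSeq w) (M a) z = z * repFun (betaSeq w) a z :=
    fun a z hz => repFun_M hpos hlim M hM0 hM a hz
  have hSe : S (lp.single 2 0 1) = 0 := by
    ext k
    refine mul_left_cancel₀ (hwc k) ?_
    rw [hSc]
    simp
  have hS1 : Good 1 S.toLinearMap := by
    refine ⟨fun y => ⟨M y, by rw [ContinuousLinearMap.coe_coe, ← clm_mul, hSM]; rfl⟩, ?_⟩
    have hker : LinearMap.ker S.toLinearMap = Submodule.span ℂ {(lp.single 2 0 1 : H2)} := by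
      refine le_antisymm ?_ ?_
      · intro a ha
        have ha' : S a = 0 := ha
        rw [Submodule.mem_span_singleton]
        refine ⟨a 0, ?_⟩
        ext k
        cases k with
        | zero => simp
        | succ k =>
          rw [← hSc a k, ha']
          simp
      · rw [Submodule.span_singleton_le_iff_mem]
        exact hSe
    rw [hker]
    have hne : (lp.single 2 0 1 : H2) ≠ 0 := by
      intro h0
      have := congrArg (fun a : H2 => a 0) h0
      simp at this
    rw [← Module.finrank_eq_rank, finrank_span_singleton hne]
  have hSζ : ∀ ζ : ℂ, ‖ζ‖ < 1 → Good 1 (S - ζ • 1).toLinearMap := by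
    intro ζ hζ
    have h1 := hS1.mul (Good.of_isUnit (hUM ζ hζ))
    have h2 : S * (1 - ζ • M) = S - ζ • 1 := by
      rw [mul_sub, mul_smul_comm, hSM, mul_one]
    rw [h2] at h1
    exact h1
  have hTq := blaschke_mul_q hUS zs hzs'
  have hqU := isUnit_qP hUS zs hzs'
  set T := blaschkeBarOp zs S with hT
  have hgood : ∀ ω ∈ unitDisk, Good m (T - ω • (1 : H2 →L[ℂ] H2)).toLinearMap := by
    intro ω hω
    have hω' : ‖ω‖ < 1 := by simpa [unitDisk] using hω
    obtain ⟨u, hu⟩ := hqU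
    set r := pP zs - Polynomial.C ω * qP zs with hr
    have hrd : r.natDegree = m := natDegree_r zs hzs' hω'
    have hr0 : r ≠ 0 := by
      intro h0
      rw [h0] at hrd
      simp at hrd
      omega
    have e1 : (T - ω • (1 : H2 →L[ℂ] H2)) * u = Polynomial.aeval S r := by
      rw [sub_mul, hu, hTq, hr, map_sub, map_mul, Polynomial.aeval_C,
        Algebra.algebraMap_eq_smul_one]
    have hsp := IsAlgClosed.splits r
    have hcard : Multiset.card r.roots = m := by
      rw [← hsp.natDegree_eq_card_roots, hrd]
    have hg1 := good_prod hSζ r.roots fun ζ hζ =>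
      root_in_disk zs hzs' hω' (Polynomial.isRoot_of_mem_roots hζ)
    have hunit : IsUnit (Polynomial.aeval S (Polynomial.C r.leadingCoeff)) := by
      rw [Polynomial.aeval_C]
      exact (IsUnit.mk0 _ (Polynomial.leadingCoeff_ne_zero.2 hr0)).map _
    have hg2 := (Good.of_isUnit hunit).mul hg1
    rw [← map_mul, ← hsp.eq_prod_roots, hcard, ← e1] at hg2
    have hg3 := hg2.mul (Good.of_isUnit u⁻¹.isUnit)
    rw [mul_assoc, Units.mul_inv, mul_one, zero_add, add_zero] at hg3
    exact hg3
  have hfin : ∀ ω ∈ unitDisk,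
      Module.finrank ℂ ↥(LinearMap.ker (T - ω • (1 : H2 →L[ℂ] H2)).toLinearMap) = m := by
    intro ω hω
    exact Module.finrank_eq_of_rank_eq (hgood ω hω).2
  refine ⟨⟨?_, ?_, ?_, hfin⟩, ?_⟩
  · intro ω hω
    rw [spectrum.mem_iff, Algebra.algebraMap_eq_smul_one]
    intro hU
    have hU' : IsUnit (T - ω • (1 : H2 →L[ℂ] H2)) := by
      rw [← neg_sub]
      exact hU.neg
    have h1 := (Good.of_isUnit hU').2
    rw [(hgood ω hω).2] at h1
    have : m = 0 := by exact_mod_cast h1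
    omega
  · intro ω hω
    exact LinearMap.range_eq_top.2 (hgood ω hω).1
  · refine dense_eigen hpos hM0 hM hUM _ (Submodule.isClosed_topologicalClosure _) ?_
    intro ζ k hζ hk
    apply Submodule.le_topologicalClosure
    have hSk : S k = ζ • k := by
      have h1 := congrArg S hk
      rw [hSe, map_sub, map_smul, ← clm_mul, hSM] at h1
      exact sub_eq_zero.1 h1
    have hlt := norm_p_lt_q hm zs hzs' hζ
    set pv := (pP zs).eval ζ with hpv
    set qv := (qP zs).eval ζ with hqv
    have hq0 : 0 < ‖qv‖ := (norm_nonneg _).trans_lt hlt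
    have hω : pv / qv ∈ unitDisk := by
      simp only [unitDisk, mem_ball_zero_iff, norm_div]
      exact (div_lt_one hq0).2 hlt
    have hqn : qv ≠ 0 := norm_pos_iff.1 hq0
    have hTk : T k = (pv / qv) • k := by
      have h1 : (T * Polynomial.aeval S (qP zs)) k = pv • k := by
        rw [hTq, aeval_eigen hSk]
      rw [clm_mul, aeval_eigen hSk, map_smul, ← hqv] at h1
      rw [div_eq_inv_mul, mul_smul, ← h1, smul_smul, inv_mul_cancel₀ hqn, one_smul]
    refine Submodule.mem_iSup_of_mem (pv / qv) (Submodule.mem_iSup_of_mem hω ?_)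
    rw [LinearMap.mem_ker]
    change T k - (pv / qv) • k = 0
    rw [hTk, sub_self]
  · obtain ⟨Q, hQ1, hQ2⟩ := exists_Q hpos hlim hSM hMrep hUS hUM zs hzs'
    have : TB = Q := by
      refine ContinuousLinearMap.ext fun a => repFun_inj hpos hlim fun z hz => ?_
      rw [hTB a z hz, hQ1 a z hz, hB]
    rw [this]
    exact hQ2
end
end
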